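/- arXiv:1501.00721 — 2 statements merged into one kernel-verified Lean document; each statement's English description precedes it below -/
import Mathlib

section
/- There exists a constant C depending only on d such that the following holds: if O is a finite family of bounded nonempty objects in ℝ^d with density ρ, and F is an (ℓ,t)-shallow packing of O with t, ℓ ≥ 1, then the induced object set { ⋃_{o ∈ c} o : c ∈ F } has density at most C·ℓ·ρ·(t+1)^C. -/
/-- A finite family `O` of subsets of `ℝ^d` has density at most `ρ` if every bounded
subset `b` of `ℝ^d` intersects at most `ρ` members of `O` whose diameter is at least
the diameter of `b`. -/
def FamilyDensityLE (d : ℕ) (O : Set (Set (EuclideanSpace ℝ (Fin d)))) (ρ : ℝ) : Prop :=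
  ∀ b : Set (EuclideanSpace ℝ (Fin d)), Bornology.IsBounded b →
    ({o ∈ O | (o ∩ b).Nonempty ∧ Metric.diam b ≤ Metric.diam o}.ncard : ℝ) ≤ ρ

/-- The intersection graph of a family of objects. -/
def InterGraph {d : ℕ} (O : Set (Set (EuclideanSpace ℝ (Fin d)))) : SimpleGraph O :=
  SimpleGraph.fromRel fun o o' => ((o : Set (EuclideanSpace ℝ (Fin d))) ∩ o').Nonempty

/-- A graph is `t`-shallow if some vertex reaches every other vertex by a path of at most
`t` edges (graph radius at most `t`). -/
def IsShallowGraph {V : Type*} (G : SimpleGraph V) (t : ℕ) : Prop :=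
  ∃ h : V, ∀ v : V, G.Reachable h v ∧ G.dist h v ≤ t

/-!
Let `b` be bounded, let `r = diam b / (4 * (t + 1))`, and let `c` be a cluster whose union meets `b`
at `x` and has diameter at least `diam b`. Any two objects of `c` are joined by a walk of length at
most `2 * t` in the intersection graph. Starting at `x`, as long as the walk meets only objects of
diameter at most `r`, each of them contributes at most `r` to the distance travelled; if this were
so on every walk, the union would have diameter at most `2 * (2 * t + 1) * r < diam b`. So `c`
contains an object of diameter at least `r` within distance `2 * t * r ≤ diam b` of `x` (any object
through `x` if `r = 0`). A ball of radius `2 * diam b` around a point of `b` meets all these objects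
and is covered by `O((t + 1) ^ d)` balls of radius `r / 2`; each of these meets at most `ρ` objects
of diameter at least `r`, and each object lies in at most `ℓ` clusters.
-/

open Metric MeasureTheory Module Set
open scoped NNReal

section Counting

variable {α β : Type*}

lemma ncard_biUnion_le_card_mul (t : Finset α) (s : α → Set β) {k : ℝ}
    (h : ∀ a ∈ t, ((s a).ncard : ℝ) ≤ k) : ((⋃ a ∈ t, s a).ncard : ℝ) ≤ t.card * k :=
  calc ((⋃ a ∈ t, s a).ncard : ℝ) ≤ ∑ a ∈ t, ((s a).ncard : ℝ) := mod_cast t.set_ncard_biUnion_le s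
    _ ≤ t.card • k := t.sum_le_card_nsmul _ k h
    _ = t.card * k := nsmul_eq_mul _ _

lemma ncard_setOf_inter_nonempty_le [Finite β] {F : β → Set α} {A : Set α} {k : ℝ}
    (hA : A.Finite) (hk : ∀ a ∈ A, ({i | a ∈ F i}.ncard : ℝ) ≤ k) :
    ({i | (F i ∩ A).Nonempty}.ncard : ℝ) ≤ A.ncard * k := by
  have hunion : {i | (F i ∩ A).Nonempty} = ⋃ a ∈ hA.toFinset, {i | a ∈ F i} := by
    ext i
    simp [Set.Nonempty, and_comm]
  rw [hunion, ncard_eq_toFinset_card A hA]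
  exact ncard_biUnion_le_card_mul _ _ fun a ha => hk a (hA.mem_toFinset.mp ha)

end Counting

section CoveringNumber

variable {E : Type*} [NormedAddCommGroup E] [NormedSpace ℝ E] [FiniteDimensional ℝ E]

-- The balls of radius `ε / 2` around the points of `s` are disjoint and lie in the ball of radius
-- `R + ε / 2`; compare volumes.
lemma card_mul_pow_le_of_isSeparated {s : Finset E} {x : E} {R : ℝ} {ε : ℝ≥0} (hR : 0 ≤ R)
    (hs : (s : Set E) ⊆ closedBall x R) (hsep : IsSeparated ε (s : Set E)) :
    s.card * (ε / 2 : ℝ) ^ finrank ℝ E ≤ (R + ε / 2) ^ finrank ℝ E := by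
  borelize E
  let μ : Measure E := Measure.addHaar
  have hdisj : (s : Set E).PairwiseDisjoint fun c => closedBall c (ε / 2 : ℝ) := by
    intro c hc c' hc' hne
    refine closedBall_disjoint_closedBall ?_
    have h : (ε : ENNReal) < edist c c' := hsep hc hc' hne
    rw [edist_nndist, ENNReal.coe_lt_coe, ← NNReal.coe_lt_coe, coe_nndist] at h
    linarith
  have hsub : ⋃ c ∈ s, closedBall c (ε / 2 : ℝ) ⊆ closedBall x (R + ε / 2) :=
    iUnion₂_subset fun c hc =>
      closedBall_subset_closedBall' (by linarith [mem_closedBall.1 (hs hc)])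
  have hvol := measureReal_mono (μ := μ) hsub measure_closedBall_lt_top.ne
  rw [measureReal_biUnion_finset hdisj (fun _ _ => measurableSet_closedBall)
    (fun _ _ => measure_closedBall_lt_top.ne), μ.addHaar_real_closedBall x (by positivity)] at hvol
  simp only [μ.addHaar_real_closedBall _ (show (0 : ℝ) ≤ ε / 2 by positivity), Finset.sum_const,
    nsmul_eq_mul, ← mul_assoc] at hvol
  exact le_of_mul_le_mul_right hvol
    (ENNReal.toReal_pos (measure_ball_pos μ _ one_pos).ne' measure_ball_lt_top.ne)

lemma card_le_of_isSeparated_closedBall {s : Finset E} {x : E} {ε : ℝ≥0} {m : ℕ} (hε : ε ≠ 0)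
    (hs : (s : Set E) ⊆ closedBall x (m * ε)) (hsep : IsSeparated ε (s : Set E)) :
    s.card ≤ (2 * m + 1) ^ finrank ℝ E := by
  have h := card_mul_pow_le_of_isSeparated (by positivity) hs hsep
  rw [show (m * ε + ε / 2 : ℝ) = (2 * m + 1) * (ε / 2) by ring, mul_pow] at h
  exact_mod_cast le_of_mul_le_mul_right h (by positivity)

lemma packingNumber_closedBall_le (x : E) {ε : ℝ≥0} (hε : ε ≠ 0) (m : ℕ) :
    packingNumber ε (closedBall x (m * ε)) ≤ ((2 * m + 1) ^ finrank ℝ E : ℕ) := by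
  refine iSup_le fun C => iSup_le fun hC => iSup_le fun hsep => ?_
  refine ENat.forall_natCast_le_iff_le.1 fun k hk => ?_
  obtain ⟨s, hsC, hs⟩ := exists_subset_encard_eq hk
  lift s to Finset E using finite_of_encard_eq_coe hs
  rw [← hs, encard_coe_eq_coe_finsetCard, Nat.cast_le]
  exact card_le_of_isSeparated_closedBall hε (hsC.trans hC) (hsep.subset hsC)

lemma coveringNumber_closedBall_le (x : E) (ε : ℝ≥0) (m : ℕ) :
    coveringNumber ε (closedBall x (m * ε)) ≤ ((2 * m + 1) ^ finrank ℝ E : ℕ) := by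
  rcases eq_or_ne ε 0 with rfl | hε
  · rw [NNReal.coe_zero, mul_zero, closedBall_zero, coveringNumber_singleton]
    exact_mod_cast Nat.one_le_pow _ _ (Nat.succ_pos _)
  · exact (coveringNumber_le_packingNumber ε _).trans (packingNumber_closedBall_le x hε m)

end CoveringNumber

section Density

variable {X : Type*} [PseudoMetricSpace X] {O : Set (Set X)} {ρ : ℝ}

/-- The family `O` of objects in a metric space has density at most `ρ`; in `ℝ^d` this is
`FamilyDensityLE`. -/
def HasDensityLE (O : Set (Set X)) (ρ : ℝ) : Prop :=
  ∀ b : Set X, Bornology.IsBounded b →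
    ({o ∈ O | (o ∩ b).Nonempty ∧ diam b ≤ diam o}.ncard : ℝ) ≤ ρ

namespace HasDensityLE

lemma nonneg (hρ : HasDensityLE O ρ) : 0 ≤ ρ :=
  (Nat.cast_nonneg _).trans (hρ ∅ Bornology.isBounded_empty)

lemma mono {ρ' : ℝ} (hρ : HasDensityLE O ρ) (h : ρ ≤ ρ') : HasDensityLE O ρ' :=
  fun b hb => (hρ b hb).trans h

lemma ncard_inter_le_of_coveringNumber_le (hρ : HasDensityLE O ρ) (hO : O.Finite) {A : Set X}
    {ε : ℝ≥0} {k : ℕ} (hA : coveringNumber ε A ≤ k) :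
    ({o ∈ O | (o ∩ A).Nonempty ∧ 2 * ε ≤ diam o}.ncard : ℝ) ≤ k * ρ := by
  obtain ⟨N, -, hNfin, hcover, hNcard⟩ :=
    exists_set_encard_eq_coveringNumber (hA.trans_lt (ENat.natCast_lt_top k)).ne
  lift N to Finset X using hNfin
  have hNk : N.card ≤ k := by
    rwa [← hNcard, encard_coe_eq_coe_finsetCard, Nat.cast_le] at hA
  let T (y : X) : Set (Set X) :=
    {o ∈ O | (o ∩ closedBall y ε).Nonempty ∧ diam (closedBall y (ε : ℝ)) ≤ diam o}
  have hsub : {o ∈ O | (o ∩ A).Nonempty ∧ 2 * ε ≤ diam o} ⊆ ⋃ y ∈ N, T y := by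
    rintro o ⟨ho, ⟨x, hxo, hxA⟩, hdiam⟩
    obtain ⟨y, hyN, hxy⟩ := mem_iUnion₂.1 (isCover_iff_subset_iUnion_closedBall.1 hcover hxA)
    exact mem_iUnion₂.2 ⟨y, hyN, ho, ⟨x, hxo, hxy⟩, (diam_closedBall ε.coe_nonneg).trans hdiam⟩
  have hfin : (⋃ y ∈ N, T y).Finite := hO.subset (iUnion₂_subset fun _ _ => sep_subset _ _)
  calc ({o ∈ O | (o ∩ A).Nonempty ∧ 2 * ε ≤ diam o}.ncard : ℝ)
      ≤ (⋃ y ∈ N, T y).ncard := mod_cast ncard_le_ncard hsub hfin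
    _ ≤ N.card * ρ := ncard_biUnion_le_card_mul N T fun y _ => hρ _ isBounded_closedBall
    _ ≤ k * ρ := by have := hρ.nonneg; gcongr

end HasDensityLE

end Density

section ShallowGraph

variable {V : Type*} {G : SimpleGraph V}

lemma IsShallowGraph.exists_walk_length_le {t : ℕ} (hG : IsShallowGraph G t) (u v : V) :
    ∃ w : G.Walk u v, w.length ≤ 2 * t := by
  obtain ⟨h, hh⟩ := hG
  obtain ⟨p, hp⟩ := (hh u).1.exists_walk_length_eq_dist
  obtain ⟨q, hq⟩ := (hh v).1.exists_walk_length_eq_dist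
  refine ⟨p.reverse.append q, ?_⟩
  rw [SimpleGraph.Walk.length_append, SimpleGraph.Walk.length_reverse, hp, hq]
  have := (hh u).2
  have := (hh v).2
  omega

variable {X : Type*} [PseudoMetricSpace X]

lemma dist_le_or_exists_le_diam_of_walk {S : V → Set X}
    (hS : ∀ v, Bornology.IsBounded (S v)) (hadj : ∀ u v, G.Adj u v → (S u ∩ S v).Nonempty)
    {r : ℝ} (hr : 0 ≤ r) {u v : V} (w : G.Walk u v) {x y : X} (hx : x ∈ S u) (hy : y ∈ S v) :
    dist x y ≤ (w.length + 1) * r ∨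
      ∃ v', r ≤ diam (S v') ∧ ∃ z ∈ S v', dist x z ≤ w.length * r := by
  induction w generalizing x with
  | @nil u =>
    rcases le_total r (diam (S u)) with hlarge | hsmall
    · exact .inr ⟨u, hlarge, x, hx, by simp⟩
    · exact .inl (by simpa using (dist_le_diam_of_mem (hS u) hx hy).trans hsmall)
  | @cons u u' v huu' w ih =>
    rcases le_total r (diam (S u)) with hlarge | hsmall
    · exact .inr ⟨u, hlarge, x, hx, by rw [dist_self]; positivity⟩
    obtain ⟨z, hzu, hzu'⟩ := hadj u u' huu'
    have hxz : dist x z ≤ r := (dist_le_diam_of_mem (hS u) hx hzu).trans hsmall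
    rw [SimpleGraph.Walk.length_cons, Nat.cast_succ]
    rcases ih hzu' hy with hzy | ⟨v', hlarge, z', hz', hzz'⟩
    · exact .inl (by linarith [dist_triangle x z y])
    · exact .inr ⟨v', hlarge, z', hz', by linarith [dist_triangle x z z']⟩

end ShallowGraph

section Cluster

variable {X : Type*}

/-- The intersection graph of a family of sets in any type; in `ℝ^d` this is `InterGraph`. -/
def intersectionGraph (O : Set (Set X)) : SimpleGraph O :=
  SimpleGraph.fromRel fun o o' => ((o : Set X) ∩ o').Nonempty

lemma inter_nonempty_of_intersectionGraph_adj {O : Set (Set X)} (u v : O)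
    (h : (intersectionGraph O).Adj u v) : ((u : Set X) ∩ v).Nonempty :=
  h.2.elim id fun h' => inter_comm (v : Set X) u ▸ h'

lemma exists_le_diam_of_isShallowGraph [PseudoMetricSpace X] {c : Set (Set X)} {t : ℕ}
    (hbdd : ∀ o ∈ c, Bornology.IsBounded o) (hc : IsShallowGraph (intersectionGraph c) t) {r : ℝ}
    (hr : 0 ≤ r) {x : X} (hx : x ∈ ⋃₀ c) (hdiam : 4 * (t + 1) * r ≤ diam (⋃₀ c)) :
    ∃ o ∈ c, r ≤ diam o ∧ ∃ z ∈ o, dist x z ≤ 2 * t * r := by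
  obtain ⟨o, ho, hxo⟩ := hx
  rcases hr.eq_or_lt with rfl | hr'
  · exact ⟨o, ho, diam_nonneg, x, hxo, by simp⟩
  by_contra hnone
  have hball : ⋃₀ c ⊆ closedBall x ((2 * t + 1) * r) := by
    rintro y ⟨o', ho', hy⟩
    obtain ⟨w, hw⟩ := hc.exists_walk_length_le ⟨o, ho⟩ ⟨o', ho'⟩
    have hw' : (w.length : ℝ) ≤ 2 * t := mod_cast hw
    rw [mem_closedBall']
    rcases dist_le_or_exists_le_diam_of_walk (S := fun v : c => (v : Set X))
      (fun v => hbdd v v.2) inter_nonempty_of_intersectionGraph_adj hr w hxo hy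
      with hxy | ⟨v, hlarge, z, hz, hxz⟩
    · exact hxy.trans (by gcongr)
    · exact (hnone ⟨v, v.2, hlarge, z, hz, hxz.trans (by gcongr)⟩).elim
  have hsmall : diam (⋃₀ c) ≤ 2 * ((2 * t + 1) * r) :=
    (diam_mono hball isBounded_closedBall).trans (diam_closedBall (by positivity))
  linarith

lemma exists_le_diam_inter_closedBall_of_isShallowGraph [PseudoMetricSpace X] {c : Set (Set X)}
    {t : ℕ} (hbdd : ∀ o ∈ c, Bornology.IsBounded o) (hc : IsShallowGraph (intersectionGraph c) t)
    {b : Set X} (hb : Bornology.IsBounded b) (hcb : (⋃₀ c ∩ b).Nonempty)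
    (hdiam : diam b ≤ diam (⋃₀ c)) {p : X} (hp : p ∈ b) {r : ℝ} (hr : 0 ≤ r)
    (hrb : 4 * (t + 1) * r ≤ diam b) :
    ∃ o ∈ c, (o ∩ closedBall p (2 * diam b)).Nonempty ∧ r ≤ diam o := by
  obtain ⟨x, hxc, hxb⟩ := hcb
  obtain ⟨o, ho, hlarge, z, hz, hxz⟩ :=
    exists_le_diam_of_isShallowGraph hbdd hc hr hxc (hrb.trans hdiam)
  refine ⟨o, ho, ⟨z, hz, mem_closedBall'.2 ?_⟩, hlarge⟩
  have hpx : dist p x ≤ diam b := dist_le_diam_of_mem hb hp hxb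
  have htr : 0 ≤ t * r := by positivity
  linarith [dist_triangle p x z]

end Cluster

section ShallowPacking

variable {X : Type*} [PseudoMetricSpace X] {O : Set (Set X)} {I : Type*} [Finite I]
  {F : I → Set (Set X)} {ρ : ℝ} {ℓ t n : ℕ}

theorem HasDensityLE.sUnion_of_isShallowGraph
    (hX : ∀ (p : X) (ε : ℝ≥0) (m : ℕ),
      coveringNumber ε (closedBall p (m * ε)) ≤ ((2 * m + 1) ^ n : ℕ))
    (hO : O.Finite) (hbdd : ∀ o ∈ O, Bornology.IsBounded o) (hρ : HasDensityLE O ρ)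
    (hF : ∀ i, F i ⊆ O) (hshallow : ∀ i, IsShallowGraph (intersectionGraph (F i)) t)
    (hℓ : ∀ o ∈ O, {i | o ∈ F i}.ncard ≤ ℓ) :
    HasDensityLE (range fun i => ⋃₀ F i) (33 ^ n * ℓ * ρ * (t + 1) ^ n) := by
  intro b hb
  have hρ0 := hρ.nonneg
  rcases b.eq_empty_or_nonempty with rfl | ⟨p, hp⟩
  · simpa using (show 0 ≤ 33 ^ n * ℓ * ρ * (t + 1) ^ n by positivity)
  let ε : ℝ≥0 := ⟨diam b / (8 * (t + 1)), by positivity⟩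
  have hε : 8 * (t + 1) * (ε : ℝ) = diam b := mul_div_cancel₀ _ (by positivity)
  let m := 16 * (t + 1)
  have hmε : m * (ε : ℝ) = 2 * diam b := by
    push_cast [m]
    linarith
  let A : Set (Set X) := {o ∈ O | (o ∩ closedBall p (m * ε)).Nonempty ∧ 2 * ε ≤ diam o}
  have hA : A.Finite := hO.subset (sep_subset _ _)
  have hmeets : {o ∈ range fun i => ⋃₀ F i | (o ∩ b).Nonempty ∧ diam b ≤ diam o} ⊆
      (fun i => ⋃₀ F i) '' {i | (F i ∩ A).Nonempty} := by
    rintro _ ⟨⟨i, rfl⟩, hib, hdiam⟩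
    obtain ⟨o, ho, hball, hlarge⟩ := exists_le_diam_inter_closedBall_of_isShallowGraph
      (fun o ho => hbdd o (hF i ho)) (hshallow i) hb hib hdiam hp
      (r := 2 * ε) (by positivity) (by linarith)
    exact ⟨i, ⟨o, ho, hF i ho, hmε ▸ hball, hlarge⟩, rfl⟩
  have hm : (2 * m + 1) ^ n ≤ 33 ^ n * (t + 1) ^ n := by
    rw [← mul_pow]
    exact Nat.pow_le_pow_left (by omega) n
  calc ({o ∈ range fun i => ⋃₀ F i | (o ∩ b).Nonempty ∧ diam b ≤ diam o}.ncard : ℝ)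
      ≤ {i | (F i ∩ A).Nonempty}.ncard :=
        mod_cast (ncard_le_ncard hmeets (toFinite _)).trans (ncard_image_le (toFinite _))
    _ ≤ A.ncard * ℓ := ncard_setOf_inter_nonempty_le hA fun o ho => mod_cast hℓ o ho.1
    _ ≤ ((2 * m + 1) ^ n : ℕ) * ρ * ℓ := by
        gcongr
        exact hρ.ncard_inter_le_of_coveringNumber_le hO (hX p ε m)
    _ ≤ (33 ^ n * (t + 1) ^ n : ℕ) * ρ * ℓ := by gcongr
    _ = 33 ^ n * ℓ * ρ * (t + 1) ^ n := by push_cast; ring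

end ShallowPacking

theorem stmt15_general (n : ℕ) :
    ∃ C : ℕ, 0 < C ∧
      ∀ (E : Type*) [NormedAddCommGroup E] [NormedSpace ℝ E] [FiniteDimensional ℝ E],
        finrank ℝ E = n →
        ∀ (O : Set (Set E)) (ρ : ℝ) (I : Type*) [Finite I] (F : I → Set (Set E)) (ℓ t : ℕ),
          O.Finite → (∀ o ∈ O, Bornology.IsBounded o) →
          HasDensityLE O ρ →
          (∀ i, F i ⊆ O) →
          (∀ i, IsShallowGraph (intersectionGraph (F i)) t) →
          (∀ o ∈ O, {i | o ∈ F i}.ncard ≤ ℓ) →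
          HasDensityLE (range fun i => ⋃₀ F i) (C * ℓ * ρ * (t + 1) ^ C) := by
  refine ⟨33 ^ n, by positivity, ?_⟩
  rintro E _ _ _ rfl O ρ I _ F ℓ t hO hbdd hρ hF hshallow hℓ
  refine (hρ.sUnion_of_isShallowGraph coveringNumber_closedBall_le hO hbdd hF hshallow hℓ).mono ?_
  have hρ0 := hρ.nonneg
  push_cast
  gcongr
  · linarith [t.cast_nonneg (α := ℝ)]
  · exact (Nat.lt_pow_self (by norm_num)).le

/-- there is a constant `C = C(d)` such that for every family `O` of density
`ρ` and every `(ℓ,t)`-shallow packing `F` of `O` (clusters indexed by a finite type `I`,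
each cluster a subfamily of `O` with `t`-shallow intersection graph, every object in at
most `ℓ` clusters), the induced object set `{⋃ c : c ∈ F}` has density at most
`C·ℓ·ρ·(t+1)^C`. -/
theorem stmt15 (d : ℕ) :
    ∃ C : ℕ, 0 < C ∧
      ∀ (O : Set (Set (EuclideanSpace ℝ (Fin d)))) (ρ : ℝ)
        (I : Type) [Fintype I] (F : I → Set (Set (EuclideanSpace ℝ (Fin d)))) (ℓ t : ℕ),
        O.Finite → (∀ o ∈ O, Bornology.IsBounded o) → (∀ o ∈ O, o.Nonempty) →
        FamilyDensityLE d O ρ → 1 ≤ ℓ → 1 ≤ t →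
        (∀ i, F i ⊆ O) →
        (∀ i, IsShallowGraph (InterGraph (F i)) t) →
        (∀ o ∈ O, ({i | o ∈ F i}).ncard ≤ ℓ) →
        FamilyDensityLE d (Set.range fun i => ⋃₀ F i)
          ((C : ℝ) * (ℓ : ℝ) * ρ * ((t : ℝ) + 1) ^ C) :=
  (stmt15_general d).imp fun _ ⟨hC, h⟩ => ⟨hC, fun O ρ I _ F ℓ t hO hbdd _ hρ _ _ =>
    h _ finrank_euclideanSpace_fin O ρ I F ℓ t hO hbdd hρ⟩
end

section
/- Let k ≥ 1 be an integer and c > 0. There exists a constant C, depending only on k and c, such that the following holds. Let G be a finite graph satisfying ∇_r(G) ≤ c·(r+1)^k for all integers r ≥ 0, let W, D be sets of vertices of G with D dominating W, let ε ∈ (0,1), and set K = ⌈C·ε^{−(2k+6)}·(1 + log(1/ε))^{2k+5}⌉. Then every K-locally minimal subset L ⊆ D that dominates W satisfies |L| ≤ (1 + ε)·min{|S| : S ⊆ D and S dominates W}. -/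
/-- `H` is a `t`-shallow minor of `G`. -/
def IsShallowMinor {V W : Type*} (G : SimpleGraph V) (H : SimpleGraph W) (t : ℕ) : Prop :=
  ∃ cl : W → Set V,
    (Pairwise fun w w' => Disjoint (cl w) (cl w')) ∧
    (∀ w, IsShallowGraph (G.induce (cl w)) t) ∧
    (∀ w w', H.Adj w w' → ∃ u ∈ cl w, ∃ v ∈ cl w', G.Adj u v)

/-- `∇_r(G) ≤ x`. -/
def NablaLE {V : Type*} (G : SimpleGraph V) (r : ℕ) (x : ℝ) : Prop :=
  ∀ (W : Type) [Fintype W] (H : SimpleGraph W),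
    IsShallowMinor G H r → (H.edgeSet.ncard : ℝ) ≤ x * (Fintype.card W : ℝ)

/-- `D` dominates `W` in `G`: every vertex of `W` is in `D` or adjacent to a vertex of `D`. -/
def Dominates {V : Type*} (G : SimpleGraph V) (D W : Set V) : Prop :=
  ∀ w ∈ W, w ∈ D ∨ ∃ u ∈ D, G.Adj u w

/-! Let `S` be an arbitrary competitor of the locally minimal set `L`. Contracting every vertex of
`W` outside `L ∪ S` into a vertex of `S` that dominates it gives a graph on `L ∪ S` in which the two
dominators of each vertex of `W` coincide or are adjacent. Its shallow clique minors are still of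
polynomial size, so the separator theorem of Plotkin, Rao and Smith applies, and cutting recursively
yields a cover of its vertices and edges by parts of at most `K` vertices whose sizes add up to at
most `(1 + δ) * #(L ∪ S)`.

Let `L_P` consist of the vertices of `L` that lie in the part `P` and in no other part. Replacing
`L_P` by `S ∩ P` preserves domination: if `w` is dominated by a vertex of `L_P`, then the part that
contains both dominators of `w` can only be `P`. Local minimality therefore gives
`#L_P ≤ #(S ∩ P)`, and summing over `P` bounds `#L`, because few vertices lie in several parts. -/

universe u

section ReachesWithin

variable {V : Type*} {G : SimpleGraph V} {Y Z : Set V} {s t : ℕ} {x y z : V}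

/-- Reachability by a walk of at most `t` edges inside `Z`. It expresses distances in `G.induce Z`
without passing to the subtype. -/
def ReachesWithin (G : SimpleGraph V) (Z : Set V) (t : ℕ) (x y : V) : Prop :=
  ∃ p : G.Walk x y, p.length ≤ t ∧ ∀ z ∈ p.support, z ∈ Z

namespace ReachesWithin

lemma refl (hx : x ∈ Z) : ReachesWithin G Z t x x :=
  ⟨.nil, t.zero_le, by simpa using hx⟩

lemma symm (h : ReachesWithin G Z t x y) : ReachesWithin G Z t y x := by
  obtain ⟨p, hlen, hsupp⟩ := h
  exact ⟨p.reverse, by simpa using hlen, by simpa using hsupp⟩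

lemma trans (hxy : ReachesWithin G Z s x y) (hyz : ReachesWithin G Z t y z) :
    ReachesWithin G Z (s + t) x z := by
  obtain ⟨p, hp, hpZ⟩ := hxy
  obtain ⟨q, hq, hqZ⟩ := hyz
  refine ⟨p.append q, by grind [SimpleGraph.Walk.length_append], fun w hw ↦ ?_⟩
  exact ((SimpleGraph.Walk.mem_support_append_iff ..).1 hw).elim (hpZ w) (hqZ w)

lemma mono (h : ReachesWithin G Y s x y) (hYZ : Y ⊆ Z) (hst : s ≤ t) : ReachesWithin G Z t x y := by
  obtain ⟨p, hlen, hsupp⟩ := h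
  exact ⟨p, hlen.trans hst, fun z hz ↦ hYZ (hsupp z hz)⟩

lemma of_adj (hx : x ∈ Z) (hy : y ∈ Z) (h : G.Adj x y) : ReachesWithin G Z 1 x y :=
  ⟨.cons h .nil, by simp, by simp [hx, hy]⟩

lemma exists_finset (h : ReachesWithin G Z t x y) :
    ∃ T : Finset V, ↑T ⊆ Z ∧ y ∈ T ∧ T.card ≤ t + 1 ∧ ∀ z ∈ T, ReachesWithin G T t x z := by
  classical
  obtain ⟨p, hlen, hsupp⟩ := h
  refine ⟨p.support.toFinset, by simpa [Set.subset_def] using hsupp, by simp, ?_, fun z hz ↦ ?_⟩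
  · exact (List.toFinset_card_le _).trans (by simpa using hlen)
  · have hz' : z ∈ p.support := List.mem_toFinset.1 hz
    exact ⟨p.takeUntil z hz', (p.length_takeUntil_le_length hz').trans hlen,
      fun w hw ↦ by simpa using p.support_takeUntil_subset_support hz' hw⟩

end ReachesWithin

/-- A vertex set inducing a `t`-shallow subgraph, in terms of walks of `G` inside `Z`. -/
def IsShallowSet (G : SimpleGraph V) (Z : Set V) (t : ℕ) : Prop :=
  ∃ v ∈ Z, ∀ z ∈ Z, ReachesWithin G Z t v z

lemma IsShallowSet.isShallowGraph_induce (h : IsShallowSet G Z t) :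
    IsShallowGraph (G.induce Z) t := by
  obtain ⟨v, hv, hreach⟩ := h
  refine ⟨⟨v, hv⟩, fun ⟨z, hz⟩ ↦ ?_⟩
  obtain ⟨p, hlen, hsupp⟩ := hreach z hz
  have hlen_induce : (p.induce Z hsupp).length = p.length := by
    rw [← SimpleGraph.Walk.length_map (SimpleGraph.Embedding.induce Z).toHom (p.induce Z hsupp),
      SimpleGraph.Walk.map_induce]
    rfl
  exact ⟨(p.induce Z hsupp).reachable, (SimpleGraph.dist_le _).trans (hlen_induce.trans_le hlen)⟩

open Finset in
lemma exists_isShallowSet_of_reachesWithin {R Y : Finset V} {v : V} (hv : v ∈ R)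
    (hreach : ∀ y ∈ Y, ReachesWithin G R t v y) :
    ∃ Z ⊆ R, Y ⊆ Z ∧ #Z ≤ 1 + #Y * (t + 1) ∧ IsShallowSet G Z t := by
  classical
  choose! T hTR hyT hTcard hT using fun y hy ↦ (hreach y hy).exists_finset
  refine ⟨insert v (Y.biUnion T), ?_, ?_, ?_, v, by simp, fun z hz ↦ ?_⟩
  · exact insert_subset hv (biUnion_subset.2 fun y hy ↦ coe_subset.1 (hTR y hy))
  · exact fun y hy ↦ mem_insert_of_mem (mem_biUnion.2 ⟨y, hy, hyT y hy⟩)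
  · have := card_insert_le v (Y.biUnion T)
    have := card_biUnion_le_card_mul Y T (t + 1) hTcard
    omega
  · obtain rfl | hz := mem_insert.1 hz
    · exact .refl hz
    · obtain ⟨y, hy, hzy⟩ := mem_biUnion.1 hz
      refine (hT y hy z hzy).mono (coe_subset.2 ?_) le_rfl
      exact (subset_biUnion_of_mem T hy).trans (subset_insert _ _)

end ReachesWithin

section OuterBoundary

open Finset

variable {V : Type*} {H : SimpleGraph V} {X Y A B M : Finset V} {x y : V}

open Classical in
/-- The outer vertex boundary of `A` in `H[X]`: the vertices of `X` outside `A` with a neighbour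
in `A`. Here `A` need not be contained in `X`. -/
noncomputable def outerBoundary (H : SimpleGraph V) (X A : Finset V) : Finset V :=
  {y ∈ X | y ∉ A ∧ ∃ x ∈ A, H.Adj x y}

lemma mem_outerBoundary : y ∈ outerBoundary H X A ↔ y ∈ X ∧ y ∉ A ∧ ∃ x ∈ A, H.Adj x y := by
  simp [outerBoundary]

lemma outerBoundary_subset : outerBoundary H X A ⊆ X :=
  fun _ hy ↦ (mem_outerBoundary.1 hy).1

lemma disjoint_outerBoundary : Disjoint A (outerBoundary H X A) :=
  disjoint_right.2 fun _ hy ↦ (mem_outerBoundary.1 hy).2.1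

lemma outerBoundary_mono (hXY : X ⊆ Y) : outerBoundary H X A ⊆ outerBoundary H Y A := by
  grind [mem_outerBoundary]

variable [DecidableEq V]

lemma mem_union_outerBoundary (hx : x ∈ A) (hy : y ∈ X) (hxy : H.Adj x y) :
    y ∈ A ∪ outerBoundary H X A := by
  grind [mem_outerBoundary]

lemma card_union_outerBoundary : #(A ∪ outerBoundary H X A) = #A + #(outerBoundary H X A) :=
  card_union_of_disjoint disjoint_outerBoundary

lemma card_outerBoundary_le_sdiff_add :
    #(outerBoundary H X A) ≤ #(outerBoundary H (X \ M) A) + #M := by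
  refine (card_le_card fun y hy ↦ ?_).trans (card_union_le _ _)
  grind [mem_outerBoundary]

lemma card_outerBoundary_union_le :
    #(outerBoundary H X (A ∪ B)) ≤ #(outerBoundary H X A) + #(outerBoundary H (X \ A) B) := by
  refine (card_le_card fun y hy ↦ ?_).trans (card_union_le _ _)
  grind [mem_outerBoundary]

end OuterBoundary

section Expansion

open Finset

variable {V : Type*} {H : SimpleGraph V} {R : Finset V} {δ : ℝ} {v w : V} {t : ℕ}

lemma exists_large_ball_of_expansion (hδ : 0 ≤ δ)
    (hexp : ∀ A ⊆ R, A.Nonempty → 2 * #A ≤ #R → δ * #A < #(outerBoundary H R A))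
    (hv : v ∈ R) (t : ℕ) :
    ∃ B ⊆ R, B.Nonempty ∧ (∀ b ∈ B, ReachesWithin H R t v b) ∧
      ((1 + δ) ^ t ≤ #B ∨ #R < 2 * #B) := by
  classical
  induction t with
  | zero =>
    exact ⟨{v}, by simpa using hv, by simp, by simpa using .refl (mem_coe.2 hv), by simp⟩
  | succ t ih =>
    obtain ⟨B, hBR, hBne, hreach, hlarge⟩ := ih
    by_cases hB : #R < 2 * #B
    · exact ⟨B, hBR, hBne, fun b hb ↦ (hreach b hb).mono le_rfl t.le_succ, .inr hB⟩
    have hpow : (1 + δ) ^ t ≤ #B := hlarge.resolve_right hB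
    have hgrow := hexp B hBR hBne (not_lt.1 hB)
    refine ⟨B ∪ outerBoundary H R B, union_subset hBR outerBoundary_subset,
      hBne.mono subset_union_left, fun b hb ↦ ?_, .inl ?_⟩
    · obtain hb | hb := mem_union.1 hb
      · exact (hreach b hb).mono le_rfl t.le_succ
      · obtain ⟨hbR, -, x, hx, hxb⟩ := mem_outerBoundary.1 hb
        exact (hreach x hx).trans (.of_adj (hBR hx) hbR hxb)
    · calc (1 + δ) ^ (t + 1) = (1 + δ) ^ t * (1 + δ) := pow_succ _ _
        _ ≤ #B * (1 + δ) := by gcongr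
        _ ≤ #(B ∪ outerBoundary H R B) := by
          rw [card_union_outerBoundary, Nat.cast_add]
          linarith

lemma reachesWithin_of_expansion (hδ : 0 ≤ δ)
    (hexp : ∀ A ⊆ R, A.Nonempty → 2 * #A ≤ #R → δ * #A < #(outerBoundary H R A))
    (ht : #R < (1 + δ) ^ t) (hv : v ∈ R) (hw : w ∈ R) : ReachesWithin H R (2 * t) v w := by
  classical
  have large_ball : ∀ v ∈ R, ∃ B ⊆ R, (∀ b ∈ B, ReachesWithin H R t v b) ∧ #R < 2 * #B := by
    intro v hv
    obtain ⟨B, hBR, -, hreach, hpow | hB⟩ := exists_large_ball_of_expansion hδ hexp hv t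
    · have hcard : (#B : ℝ) ≤ #R := by exact_mod_cast card_le_card hBR
      exact absurd ht (not_lt.2 (hpow.trans hcard))
    · exact ⟨B, hBR, hreach, hB⟩
  obtain ⟨B, hBR, hreachB, hB⟩ := large_ball v hv
  obtain ⟨C, hCR, hreachC, hC⟩ := large_ball w hw
  have hmeet : ¬Disjoint B C := fun hdisj ↦ by
    have := card_union_of_disjoint hdisj
    have := card_le_card (union_subset hBR hCR)
    omega
  obtain ⟨z, hzB, hzC⟩ := not_disjoint_iff.1 hmeet
  exact two_mul t ▸ (hreachB z hzB).trans (hreachC z hzC).symm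

end Expansion

section ShallowCliqueModel

open Finset

variable {V : Type*} {H : SimpleGraph V} {X Y Z N : Finset V} {F F' : Finset (Finset V)}
  {r k : ℕ} {c : ℝ}

/-- `F` is the family of clusters of a complete graph as an `r`-shallow minor of `H[X]`. -/
structure IsShallowCliqueModel (H : SimpleGraph V) (X : Finset V) (r : ℕ)
    (F : Finset (Finset V)) : Prop where
  subset : ∀ Z ∈ F, Z ⊆ X
  isShallowSet : ∀ Z ∈ F, IsShallowSet H Z r
  disjoint : ∀ Z ∈ F, ∀ Z' ∈ F, Z ≠ Z' → Disjoint Z Z'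
  exists_adj : ∀ Z ∈ F, ∀ Z' ∈ F, Z ≠ Z' → ∃ x ∈ Z, ∃ y ∈ Z', H.Adj x y

namespace IsShallowCliqueModel

lemma nonempty (hF : IsShallowCliqueModel H X r F) (hZ : Z ∈ F) : Z.Nonempty :=
  let ⟨v, hv, _⟩ := hF.isShallowSet Z hZ
  ⟨v, hv⟩

lemma mono (hF : IsShallowCliqueModel H X r F) (hXY : X ⊆ Y) : IsShallowCliqueModel H Y r F where
  __ := hF
  subset Z hZ := (hF.subset Z hZ).trans hXY

lemma anti (hF : IsShallowCliqueModel H X r F) (hF' : F' ⊆ F) : IsShallowCliqueModel H X r F' where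
  subset Z hZ := hF.subset Z (hF' hZ)
  isShallowSet Z hZ := hF.isShallowSet Z (hF' hZ)
  disjoint Z hZ Z' hZ' := hF.disjoint Z (hF' hZ) Z' (hF' hZ')
  exists_adj Z hZ Z' hZ' := hF.exists_adj Z (hF' hZ) Z' (hF' hZ')

lemma insert [DecidableEq V] (hF : IsShallowCliqueModel H X r F) (hNX : N ⊆ X)
    (hN : IsShallowSet H N r) (hdisj : ∀ Z ∈ F, Disjoint N Z)
    (hadj : ∀ Z ∈ F, ∃ x ∈ Z, ∃ y ∈ N, H.Adj x y) :
    IsShallowCliqueModel H X r (insert N F) where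
  subset := by simpa [hNX] using hF.subset
  isShallowSet := by simpa [hN] using hF.isShallowSet
  disjoint Z hZ Z' hZ' hne := by
    obtain rfl | hZF := mem_insert.1 hZ <;> obtain rfl | hZF' := mem_insert.1 hZ'
    · exact absurd rfl hne
    · exact hdisj Z' hZF'
    · exact (hdisj Z hZF).symm
    · exact hF.disjoint Z hZF Z' hZF' hne
  exists_adj Z hZ Z' hZ' hne := by
    obtain rfl | hZF := mem_insert.1 hZ <;> obtain rfl | hZF' := mem_insert.1 hZ'
    · exact absurd rfl hne
    · obtain ⟨x, hx, y, hy, hxy⟩ := hadj Z' hZF'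
      exact ⟨y, hy, x, hx, hxy.symm⟩
    · exact hadj Z hZF
    · exact hF.exists_adj Z hZF Z' hZF' hne

end IsShallowCliqueModel

/-- Every complete `r`-shallow minor of `H[X]` has at most `c * (r + 1) ^ k` vertices. This weak
form of polynomial expansion is all that the separator theorem needs. -/
def HasPolynomialCliqueBound (H : SimpleGraph V) (X : Finset V) (k : ℕ) (c : ℝ) : Prop :=
  ∀ r F, IsShallowCliqueModel H X r F → #F ≤ c * ((r : ℝ) + 1) ^ k

lemma HasPolynomialCliqueBound.anti (h : HasPolynomialCliqueBound H X k c) (hYX : Y ⊆ X) :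
    HasPolynomialCliqueBound H Y k c :=
  fun r F hF ↦ h r F (hF.mono hYX)

end ShallowCliqueModel

section SeparatorSearch

open Finset

variable {V : Type*} [DecidableEq V] {H : SimpleGraph V} {X U A Z N : Finset V}
  {F : Finset (Finset V)} {r s h : ℕ} {η : ℝ}

/-- A state of the Plotkin–Rao–Smith search for a separator of `H[X]`: a shallow clique model `F`
with clusters of size at most `s`, and a set `U` of discarded vertices that has few neighbours
outside the clusters. -/
structure IsSeparatorSearchState (H : SimpleGraph V) (X : Finset V) (r s : ℕ) (η : ℝ)
    (U : Finset V) (F : Finset (Finset V)) : Prop where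
  model : IsShallowCliqueModel H X r F
  card_le : ∀ Z ∈ F, #Z ≤ s
  subset : U ⊆ X
  four_mul_card_le : 4 * #U ≤ 3 * #X
  disjoint : Disjoint U (F.biUnion id)
  boundary_le : #(outerBoundary H (X \ F.biUnion id) U) ≤ η * #U

namespace IsSeparatorSearchState

lemma empty : IsSeparatorSearchState H X r s η ∅ ∅ where
  model := ⟨by simp, by simp, by simp, by simp⟩
  card_le := by simp
  subset := by simp
  four_mul_card_le := by simp
  disjoint := by simp
  boundary_le := by simp [outerBoundary]

lemma discard (hUF : IsSeparatorSearchState H X r s η U F) (hA : A ⊆ (X \ F.biUnion id) \ U)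
    (hcard : 4 * (#U + #A) ≤ 3 * #X)
    (hbd : #(outerBoundary H ((X \ F.biUnion id) \ U) A) ≤ η * #A) :
    IsSeparatorSearchState H X r s η (U ∪ A) F where
  model := hUF.model
  card_le := hUF.card_le
  subset := union_subset hUF.subset (by grind)
  four_mul_card_le := by grind [card_union_le U A]
  disjoint := disjoint_union_left.2 ⟨hUF.disjoint, by grind [disjoint_left]⟩
  boundary_le := by
    have hdisj : Disjoint U A := disjoint_right.2 fun x hx ↦ (mem_sdiff.1 (hA hx)).2
    calc (#(outerBoundary H (X \ F.biUnion id) (U ∪ A)) : ℝ)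
        ≤ #(outerBoundary H (X \ F.biUnion id) U)
          + #(outerBoundary H ((X \ F.biUnion id) \ U) A) := by
          exact_mod_cast card_outerBoundary_union_le
      _ ≤ η * #U + η * #A := add_le_add hUF.boundary_le hbd
      _ = η * #(U ∪ A) := by rw [card_union_of_disjoint hdisj]; push_cast; ring

lemma discard_cluster (hUF : IsSeparatorSearchState H X r s η U F) (hη : 0 ≤ η) (hZ : Z ∈ F)
    (hcard : 4 * (#U + #Z) ≤ 3 * #X)
    (hnadj : ∀ y ∈ (X \ F.biUnion id) \ U, ∀ x ∈ Z, ¬H.Adj x y) :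
    IsSeparatorSearchState H X r s η (U ∪ Z) (F.erase Z) where
  model := hUF.model.anti (erase_subset _ _)
  card_le Z' hZ' := hUF.card_le Z' (mem_of_mem_erase hZ')
  subset := union_subset hUF.subset (hUF.model.subset Z hZ)
  four_mul_card_le := by grind [card_union_le U Z]
  disjoint := by
    refine disjoint_union_left.2 ⟨hUF.disjoint.mono_right ?_, ?_⟩
    · exact biUnion_subset_biUnion_of_subset_left _ (erase_subset _ _)
    · refine (disjoint_biUnion_right ..).2 fun Z' hZ' ↦ ?_
      exact hUF.model.disjoint Z hZ Z' (mem_of_mem_erase hZ') (ne_of_mem_erase hZ').symm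
  boundary_le := by
    have hF : F.biUnion id = Z ∪ (F.erase Z).biUnion id := by
      rw [← insert_erase hZ, biUnion_insert, erase_insert (notMem_erase _ _), id]
    have hsub : outerBoundary H (X \ (F.erase Z).biUnion id) (U ∪ Z) ⊆
        outerBoundary H (X \ F.biUnion id) U := fun y hy ↦ by
      grind [mem_outerBoundary]
    calc (#(outerBoundary H (X \ (F.erase Z).biUnion id) (U ∪ Z)) : ℝ)
        ≤ #(outerBoundary H (X \ F.biUnion id) U) := by exact_mod_cast card_le_card hsub
      _ ≤ η * #U := hUF.boundary_le
      _ ≤ η * #(U ∪ Z) := by gcongr; exact subset_union_left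

lemma insert_cluster (hUF : IsSeparatorSearchState H X r s η U F)
    (hN : N ⊆ (X \ F.biUnion id) \ U) (hNs : #N ≤ s) (hNr : IsShallowSet H N r)
    (hadj : ∀ Z ∈ F, ∃ x ∈ Z, ∃ y ∈ N, H.Adj x y) :
    IsSeparatorSearchState H X r s η U (insert N F) where
  model := by
    refine hUF.model.insert (by grind) hNr (fun Z hZ ↦ ?_) hadj
    have : Z ⊆ F.biUnion id := subset_biUnion_of_mem id hZ
    grind [disjoint_left]
  card_le := by simpa [hNs] using hUF.card_le
  subset := hUF.subset
  four_mul_card_le := hUF.four_mul_card_le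
  disjoint := by
    rw [biUnion_insert]
    exact disjoint_union_right.2 ⟨by grind [disjoint_left], hUF.disjoint⟩
  boundary_le := by
    have hsub : X \ (insert N F).biUnion id ⊆ X \ F.biUnion id :=
      sdiff_subset_sdiff le_rfl (biUnion_subset_biUnion_of_subset_left _ (subset_insert _ _))
    refine le_trans ?_ hUF.boundary_le
    exact_mod_cast card_le_card (outerBoundary_mono hsub)

lemma exists_maximal (H : SimpleGraph V) (X : Finset V) (r s : ℕ) (η : ℝ) :
    ∃ U F, IsSeparatorSearchState H X r s η U F ∧
      ∀ U' F', IsSeparatorSearchState H X r s η U' F' → 2 * #U' + #F' ≤ 2 * #U + #F := by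
  classical
  obtain ⟨⟨U, F⟩, hUF, hmax⟩ := exists_max_image
    {p ∈ X.powerset ×ˢ X.powerset.powerset | IsSeparatorSearchState H X r s η p.1 p.2}
    (fun p ↦ 2 * #p.1 + #p.2) ⟨(∅, ∅), by simpa using empty⟩
  refine ⟨U, F, (mem_filter.1 hUF).2, fun U' F' h' ↦ hmax (U', F') (mem_filter.2 ⟨?_, h'⟩)⟩
  exact mem_product.2 ⟨mem_powerset.2 h'.subset,
    mem_powerset.2 fun Z hZ ↦ mem_powerset.2 (h'.model.subset Z hZ)⟩

lemma eight_mul_card_le (hUF : IsSeparatorSearchState H X r s η U F) (hη : 0 < η)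
    (hexp : ∀ A ⊆ X, A.Nonempty → 4 * #A ≤ 3 * #X → 2 * η * #A < #(outerBoundary H X A))
    (hF : 8 * #(F.biUnion id) ≤ η * #X) : 8 * #U ≤ #X := by
  obtain rfl | hU := U.eq_empty_or_nonempty
  · simp
  have hsplit : (#(outerBoundary H X U) : ℝ) ≤
      #(outerBoundary H (X \ F.biUnion id) U) + #(F.biUnion id) := by
    exact_mod_cast card_outerBoundary_le_sdiff_add
  have hU_lt := hexp U hUF.subset hU hUF.four_mul_card_le
  have hmul : η * (8 * #U) ≤ η * #X := by linarith [hUF.boundary_le]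
  exact_mod_cast le_of_mul_le_mul_left hmul hη

lemma card_lt_of_reachesWithin (hUF : IsSeparatorSearchState H X r (1 + h * (r + 1)) η U F)
    (hFh : #F < h) {v : V} (hv : v ∈ (X \ F.biUnion id) \ U)
    (hreach : ∀ y ∈ (X \ F.biUnion id) \ U,
      ReachesWithin H ↑((X \ F.biUnion id) \ U) r v y)
    (hnbr : ∀ Z ∈ F, ∃ y ∈ (X \ F.biUnion id) \ U, ∃ x ∈ Z, H.Adj x y) :
    ∃ F', IsSeparatorSearchState H X r (1 + h * (r + 1)) η U F' ∧ #F < #F' := by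
  have : Nonempty V := ⟨v⟩
  choose! y hyR x hxZ hxy using hnbr
  obtain ⟨N, hNR, hyN, hNcard, hNr⟩ := exists_isShallowSet_of_reachesWithin (Y := F.image y) hv
    (by simpa using fun Z hZ ↦ hreach (y Z) (hyR Z hZ))
  have hNs : #N ≤ 1 + h * (r + 1) := by
    refine hNcard.trans ?_
    gcongr
    exact card_image_le.trans hFh.le
  have hNF : N ∉ F := fun hN ↦ by
    obtain ⟨z, hz, -⟩ := hNr
    exact (mem_sdiff.1 (mem_sdiff.1 (hNR hz)).1).2 (mem_biUnion.2 ⟨N, hN, hz⟩)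
  refine ⟨insert N F, hUF.insert_cluster hNR hNs hNr fun Z hZ ↦ ?_, by simp [hNF]⟩
  exact ⟨x Z, hxZ Z hZ, y Z, hyN (mem_image_of_mem y hZ), hxy Z hZ⟩

lemma lt_card_outerBoundary_of_maximal (hUF : IsSeparatorSearchState H X r s η U F)
    (hmax : ∀ U' F', IsSeparatorSearchState H X r s η U' F' → 2 * #U' + #F' ≤ 2 * #U + #F)
    (hU : 8 * #U ≤ #X) (hA : A ⊆ (X \ F.biUnion id) \ U) (hne : A.Nonempty)
    (hhalf : 2 * #A ≤ #((X \ F.biUnion id) \ U)) :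
    η * #A < #(outerBoundary H ((X \ F.biUnion id) \ U) A) := by
  by_contra! hbd
  have hdisj : Disjoint U A := disjoint_right.2 fun x hx ↦ (mem_sdiff.1 (hA hx)).2
  have hRX : #((X \ F.biUnion id) \ U) ≤ #X := card_le_card (sdiff_subset.trans sdiff_subset)
  have := hmax _ _ (hUF.discard hA (by omega) hbd)
  have := card_union_of_disjoint hdisj
  have := hne.card_pos
  omega

lemma exists_adj_of_maximal (hUF : IsSeparatorSearchState H X r s η U F) (hη : 0 ≤ η)
    (hmax : ∀ U' F', IsSeparatorSearchState H X r s η U' F' → 2 * #U' + #F' ≤ 2 * #U + #F)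
    (hU : 8 * #U ≤ #X) (hM : 8 * #(F.biUnion id) ≤ #X) (hZ : Z ∈ F) :
    ∃ y ∈ (X \ F.biUnion id) \ U, ∃ x ∈ Z, H.Adj x y := by
  by_contra! hnadj
  have hZM : Z ⊆ F.biUnion id := subset_biUnion_of_mem id hZ
  have := card_le_card hZM
  have := hmax _ _ (hUF.discard_cluster hη hZ (by omega) hnadj)
  have := card_union_of_disjoint (hUF.disjoint.mono_right hZM)
  have := card_erase_of_mem hZ
  have := (hUF.model.nonempty hZ).card_pos
  omega

end IsSeparatorSearchState

end SeparatorSearch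

section Separator

open Finset

variable {V : Type*} {H : SimpleGraph V} {X : Finset V} {t h : ℕ} {η : ℝ}

/- In a search state maximizing `2 * #U + #F` (the factor `2` makes it profitable to discard a
cluster), the rest of `X` is an expander, hence shallow, and every cluster has a neighbour in it. So
a small shallow subset of the rest that touches all clusters could be added as a new cluster. -/
theorem exists_card_outerBoundary_le (hX : X.Nonempty) (hη0 : 0 < η) (hη1 : η ≤ 1)
    (hclique : ∀ F, IsShallowCliqueModel H X (2 * t) F → #F < h) (ht : #X < (1 + η) ^ t)
    (hh : 8 * (h * (1 + h * (2 * t + 1)) : ℝ) ≤ η * #X) :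
    ∃ A ⊆ X, A.Nonempty ∧ 4 * #A ≤ 3 * #X ∧ #(outerBoundary H X A) ≤ 2 * η * #A := by
  classical
  by_contra! hexp
  obtain ⟨U, F, hUF, hmax⟩ :=
    IsSeparatorSearchState.exists_maximal H X (2 * t) (1 + h * (2 * t + 1)) η
  have hFh : #F < h := hclique F hUF.model
  have hMη : 8 * (#(F.biUnion id) : ℝ) ≤ η * #X := by
    have hM : #(F.biUnion id) ≤ h * (1 + h * (2 * t + 1)) :=
      (card_biUnion_le_card_mul F id _ hUF.card_le).trans (Nat.mul_le_mul_right _ hFh.le)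
    have : (#(F.biUnion id) : ℝ) ≤ h * (1 + h * (2 * t + 1)) := by exact_mod_cast hM
    linarith
  have hM8 : 8 * #(F.biUnion id) ≤ #X := by
    exact_mod_cast hMη.trans (mul_le_of_le_one_left (Nat.cast_nonneg _) hη1)
  have hU8 : 8 * #U ≤ #X := hUF.eight_mul_card_le hη0 hexp hMη
  have hRpow : #((X \ F.biUnion id) \ U) < (1 + η) ^ t :=
    lt_of_le_of_lt (by exact_mod_cast card_le_card (sdiff_subset.trans sdiff_subset)) ht
  obtain ⟨v, hv⟩ : ((X \ F.biUnion id) \ U).Nonempty := by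
    have := le_card_sdiff (F.biUnion id) X
    have := le_card_sdiff U (X \ F.biUnion id)
    have := hX.card_pos
    exact card_pos.1 (by omega)
  have hreach := fun y (hy : y ∈ (X \ F.biUnion id) \ U) ↦ reachesWithin_of_expansion hη0.le
    (fun A ↦ hUF.lt_card_outerBoundary_of_maximal hmax hU8) hRpow hv hy
  obtain ⟨F', hUF', hlt⟩ := hUF.card_lt_of_reachesWithin hFh hv hreach
    fun Z ↦ hUF.exists_adj_of_maximal hη0.le hmax hU8 hM8
  have := hmax _ _ hUF'
  omega

end Separator

section SeparatorNumerics

open Real Filter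

variable {c : ℝ} {k : ℕ}

lemma exists_lt_one_add_pow {δ x : ℝ} (hδ0 : 0 < δ) (hδ1 : δ ≤ 1) (hx : 1 ≤ x) :
    ∃ t : ℕ, x < (1 + δ) ^ t ∧ (2 * t + 1) * δ ≤ 4 * log x + 3 := by
  have hlogx : 0 ≤ log x := log_nonneg hx
  have hlog : δ / 2 ≤ log (1 + δ) := by
    refine le_trans ?_ (le_log_one_add_of_nonneg hδ0.le)
    rw [div_le_div_iff₀ two_pos (by linarith)]
    nlinarith
  refine ⟨⌊2 * log x / δ⌋₊ + 1, ?_, ?_⟩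
  · rw [lt_pow_iff_log_lt (by linarith) (by linarith)]
    have hfloor : 2 * log x / δ < (⌊2 * log x / δ⌋₊ + 1 : ℕ) := by
      exact_mod_cast Nat.lt_floor_add_one _
    calc log x = 2 * log x / δ * (δ / 2) := by field_simp
      _ < (⌊2 * log x / δ⌋₊ + 1 : ℕ) * (δ / 2) := by gcongr
      _ ≤ _ := by gcongr
  · have hfloor : ⌊2 * log x / δ⌋₊ * δ ≤ 2 * log x := by
      rw [← le_div_iff₀ hδ0]
      exact Nat.floor_le (by positivity)
    push_cast
    linarith

lemma exists_nat_mul_pow_lt {y : ℝ} (hc : 0 ≤ c) (hy : 1 ≤ y) :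
    ∃ h : ℕ, c * y ^ k < h ∧ h * (1 + h * y) ≤ 2 * (c + 1) ^ 2 * y ^ (2 * k + 1) := by
  have hyk : 1 ≤ y ^ k := one_le_pow₀ hy
  refine ⟨⌊c * y ^ k⌋₊ + 1, by exact_mod_cast Nat.lt_floor_add_one _, ?_⟩
  set h := ⌊c * y ^ k⌋₊ + 1
  have h1 : (1 : ℝ) ≤ h := by simp [h]
  have hh : (h : ℝ) ≤ (c + 1) * y ^ k := by
    have := Nat.floor_le (show 0 ≤ c * y ^ k by positivity)
    push_cast [h]
    linarith
  calc h * (1 + h * y) ≤ h * (h * y + h * y) := by gcongr; nlinarith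
    _ = 2 * (h : ℝ) ^ 2 * y := by ring
    _ ≤ 2 * ((c + 1) * y ^ k) ^ 2 * y := by gcongr
    _ = 2 * (c + 1) ^ 2 * y ^ (2 * k + 1) := by ring

lemma eventually_mul_log_pow_le (A a b : ℝ) (m : ℕ) {β : ℝ} (hβ : 0 < β) :
    ∀ᶠ x : ℝ in atTop, A * (a * log x + b) ^ m ≤ x ^ β := by
  have hlog : (fun x ↦ a * log x + b) =O[atTop] log :=
    ((Asymptotics.isBigO_refl _ _).const_mul_left a).add (isLittleO_const_log_atTop).isBigO
  have hlittle : (fun x : ℝ ↦ A * (a * log x + b) ^ m) =o[atTop] (· ^ β) := by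
    refine ((hlog.pow m).const_mul_left A).trans_isLittleO ?_
    simpa using isLittleO_log_rpow_rpow_atTop (m : ℝ) hβ
  filter_upwards [hlittle.bound one_pos, eventually_ge_atTop 0] with x hx hx0
  rw [one_mul, norm_of_nonneg (rpow_nonneg hx0 β)] at hx
  exact (le_abs_self _).trans hx

lemma eventually_separator_params (hc : 0 ≤ c) {γ : ℝ} (hγ0 : 0 < γ)
    (hγ1 : γ * (2 * k + 2) < 1) : ∀ᶠ x : ℝ in atTop, x ^ (-γ) ≤ 1 / 8 ∧ ∃ t h : ℕ,
      x < (1 + x ^ (-γ) / 2) ^ t ∧ c * (2 * t + 1) ^ k < h ∧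
      8 * (h * (1 + h * (2 * t + 1) : ℝ)) ≤ x ^ (-γ) / 2 * x := by
  have hβ : 0 < 1 - γ * (2 * k + 2) := by linarith
  have hsmall : ∀ᶠ x : ℝ in atTop, x ^ (-γ) ≤ 1 / 8 :=
    (tendsto_rpow_neg_atTop hγ0).eventually_le_const (by norm_num)
  filter_upwards [hsmall, eventually_mul_log_pow_le (32 * (c + 1) ^ 2) 8 6 (2 * k + 1) hβ,
    eventually_ge_atTop 1] with x hsmall hlog hx
  have hx0 : 0 < x := by linarith
  have hpos : 0 < x ^ (-γ) := rpow_pos_of_pos hx0 _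
  obtain ⟨t, ht, ht_le⟩ := exists_lt_one_add_pow (half_pos hpos) (by linarith) hx
  obtain ⟨h, hh, hh_le⟩ := exists_nat_mul_pow_lt (k := k) hc (show (1 : ℝ) ≤ 2 * t + 1 by simp)
  refine ⟨hsmall, t, h, ht, hh, ?_⟩
  have ht_le' : (2 * t + 1 : ℝ) ≤ x ^ γ * (8 * log x + 6) := by
    have : (2 * t + 1 : ℝ) = x ^ γ * (2 * ((2 * t + 1) * (x ^ (-γ) / 2))) := by
      rw [rpow_neg hx0.le]
      field_simp
    rw [this]
    gcongr
    linarith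
  calc 8 * (h * (1 + h * (2 * t + 1) : ℝ))
      ≤ 8 * (2 * (c + 1) ^ 2 * (2 * t + 1) ^ (2 * k + 1)) := by gcongr
    _ ≤ 8 * (2 * (c + 1) ^ 2 * (x ^ γ * (8 * log x + 6)) ^ (2 * k + 1)) := by gcongr
    _ = 32 * (c + 1) ^ 2 * (8 * log x + 6) ^ (2 * k + 1) * (x ^ γ) ^ (2 * k + 1) / 2 := by
        rw [mul_pow]; ring
    _ ≤ x ^ (1 - γ * (2 * k + 2)) * (x ^ γ) ^ (2 * k + 1) / 2 := by gcongr
    _ = x ^ (-γ) / 2 * x := by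
      rw [← rpow_mul_natCast hx0.le, ← rpow_add hx0, div_mul_eq_mul_div, ← rpow_add_one hx0.ne']
      congr 2
      push_cast
      ring

open Finset in
theorem exists_separator (hc : 0 ≤ c) {γ : ℝ} (hγ0 : 0 < γ) (hγ1 : γ * (2 * k + 2) < 1) :
    ∃ n₀ : ℝ, ∀ (V : Type u) [DecidableEq V] (H : SimpleGraph V) (X : Finset V),
      HasPolynomialCliqueBound H X k c → n₀ ≤ #X →
        ∃ A ⊆ X, A.Nonempty ∧ 8 * #(A ∪ outerBoundary H X A) ≤ 7 * #X ∧
          #(outerBoundary H X A) ≤ (#X : ℝ) ^ (-γ) * #A := by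
  obtain ⟨n₀, hn₀⟩ := eventually_atTop.1
    ((eventually_separator_params hc hγ0 hγ1).and (eventually_gt_atTop 0))
  refine ⟨n₀, fun V _ H X hX hn ↦ ?_⟩
  obtain ⟨⟨hsmall, t, h, ht, hh, hsize⟩, hXpos⟩ := hn₀ _ hn
  have hXne : X.Nonempty := card_pos.1 (by exact_mod_cast hXpos)
  obtain ⟨A, hAX, hAne, hA, hbd⟩ := exists_card_outerBoundary_le (H := H) hXne
    (half_pos (rpow_pos_of_pos hXpos (-γ))) (by linarith)
    (fun F hF ↦ Nat.cast_lt.1 ((hX _ F hF).trans_lt (by push_cast; exact hh))) ht hsize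
  rw [mul_div_cancel₀ _ two_ne_zero] at hbd
  refine ⟨A, hAX, hAne, ?_, hbd⟩
  have hbd8 : 8 * #(outerBoundary H X A) ≤ #A := by
    have : (8 * #(outerBoundary H X A) : ℝ) ≤ #A := by nlinarith
    exact_mod_cast this
  rw [card_union_outerBoundary]
  omega

end SeparatorNumerics

section BoundedCover

open Finset

variable {V : Type*} {H : SimpleGraph V} {X A : Finset V} {K : ℕ}
  {𝒞 𝒟 : Finset (Finset V)}

/-- A cover of the vertices and edges of `H[X]` by induced subgraphs on at most `K` vertices. -/
structure IsBoundedCover (H : SimpleGraph V) (X : Finset V) (K : ℕ)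
    (𝒞 : Finset (Finset V)) : Prop where
  subset : ∀ P ∈ 𝒞, P ⊆ X
  card_le : ∀ P ∈ 𝒞, #P ≤ K
  exists_mem : ∀ x ∈ X, ∃ P ∈ 𝒞, x ∈ P
  exists_mem_of_adj : ∀ x ∈ X, ∀ y ∈ X, H.Adj x y → ∃ P ∈ 𝒞, x ∈ P ∧ y ∈ P

namespace IsBoundedCover

lemma singleton (hX : #X ≤ K) : IsBoundedCover H X K {X} where
  subset := by simp
  card_le := by simpa using hX
  exists_mem := by simp
  exists_mem_of_adj := by simp +contextual

variable [DecidableEq V]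

lemma union (hAX : A ⊆ X) (h𝒞 : IsBoundedCover H (A ∪ outerBoundary H X A) K 𝒞)
    (h𝒟 : IsBoundedCover H (X \ A) K 𝒟) : IsBoundedCover H X K (𝒞 ∪ 𝒟) where
  subset P hP := (mem_union.1 hP).elim
    (fun hP ↦ (h𝒞.subset P hP).trans (union_subset hAX outerBoundary_subset))
    (fun hP ↦ (h𝒟.subset P hP).trans sdiff_subset)
  card_le P hP := (mem_union.1 hP).elim (h𝒞.card_le P) (h𝒟.card_le P)
  exists_mem x hx := by
    by_cases hxA : x ∈ A
    · obtain ⟨P, hP, hxP⟩ := h𝒞.exists_mem x (mem_union_left _ hxA)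
      exact ⟨P, mem_union_left _ hP, hxP⟩
    · obtain ⟨P, hP, hxP⟩ := h𝒟.exists_mem x (mem_sdiff.2 ⟨hx, hxA⟩)
      exact ⟨P, mem_union_right _ hP, hxP⟩
  exists_mem_of_adj x hx y hy hxy := by
    by_cases h : x ∈ A ∨ y ∈ A
    · obtain ⟨hx', hy'⟩ : x ∈ A ∪ outerBoundary H X A ∧ y ∈ A ∪ outerBoundary H X A := by
        obtain hxA | hyA := h
        · exact ⟨mem_union_left _ hxA, mem_union_outerBoundary hxA hy hxy⟩
        · exact ⟨mem_union_outerBoundary hyA hx hxy.symm, mem_union_left _ hyA⟩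
      obtain ⟨P, hP, hxyP⟩ := h𝒞.exists_mem_of_adj x hx' y hy' hxy
      exact ⟨P, mem_union_left _ hP, hxyP⟩
    · obtain ⟨hxA, hyA⟩ := not_or.1 h
      obtain ⟨P, hP, hxyP⟩ := h𝒟.exists_mem_of_adj x (mem_sdiff.2 ⟨hx, hxA⟩) y
        (mem_sdiff.2 ⟨hy, hyA⟩) hxy
      exact ⟨P, mem_union_right _ hP, hxyP⟩

end IsBoundedCover

variable [DecidableEq V]

lemma sum_card_union_le : ∑ P ∈ 𝒞 ∪ 𝒟, #P ≤ ∑ P ∈ 𝒞, #P + ∑ P ∈ 𝒟, #P :=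
  (Nat.le_add_right _ _).trans (sum_union_inter (f := fun P ↦ #P)).le

/- Cutting off `A` duplicates only the boundary of `A`, and this is paid for by the decrease of the
overhead `g` on the piece that contains `A`. -/
theorem exists_boundedCover_of_separators {g : ℕ → ℝ} (hg0 : ∀ n, 0 ≤ g n) (hg1 : ∀ n, g n ≤ 1)
    (hmono : MonotoneOn g (Set.Ioi 0))
    (hsep : ∀ Y ⊆ X, K < #Y → ∃ A ⊆ Y, A.Nonempty ∧ #(A ∪ outerBoundary H Y A) < #Y ∧
      2 * #(outerBoundary H Y A) ≤ (g #Y - g #(A ∪ outerBoundary H Y A)) * #A) :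
    ∃ 𝒞, IsBoundedCover H X K 𝒞 ∧ ∑ P ∈ 𝒞, (#P : ℝ) ≤ #X * (1 + g #X) := by
  induction X using Finset.strongInduction with
  | H X ih =>
  obtain hXK | hKX := le_or_gt #X K
  · refine ⟨{X}, .singleton hXK, ?_⟩
    rw [sum_singleton]
    exact le_mul_of_one_le_right (Nat.cast_nonneg _) (by linarith [hg0 #X])
  obtain ⟨A, hAX, hAne, hlt, hbd⟩ := hsep X Subset.rfl hKX
  set B := A ∪ outerBoundary H X A with hB
  have hBX : B ⊂ X :=
    (union_subset hAX outerBoundary_subset).ssubset_of_ne fun h ↦ hlt.ne (congr_arg card h)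
  have hXA : X \ A ⊂ X := sdiff_ssubset hAX hAne
  obtain ⟨𝒞, h𝒞, hsum𝒞⟩ := ih B hBX fun Y hY ↦ hsep Y (hY.trans hBX.subset)
  obtain ⟨𝒟, h𝒟, hsum𝒟⟩ := ih (X \ A) hXA fun Y hY ↦ hsep Y (hY.trans hXA.subset)
  refine ⟨𝒞 ∪ 𝒟, h𝒞.union hAX h𝒟, ?_⟩
  have hcardB : (#B : ℝ) = #A + #(outerBoundary H X A) := by
    exact_mod_cast card_union_outerBoundary
  have hcardXA : (#(X \ A) : ℝ) = #X - #A := cast_card_sdiff hAX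
  have hgXA : #(X \ A) * (1 + g #(X \ A)) ≤ #(X \ A) * (1 + g #X) := by
    obtain h0 | hpos := (#(X \ A)).eq_zero_or_pos
    · simp [h0]
    · gcongr
      exact hmono hpos (hpos.trans (card_lt_card hXA)) (card_lt_card hXA).le
  calc ∑ P ∈ 𝒞 ∪ 𝒟, (#P : ℝ) ≤ ∑ P ∈ 𝒞, (#P : ℝ) + ∑ P ∈ 𝒟, (#P : ℝ) := by
        exact_mod_cast sum_card_union_le
    _ ≤ #B * (1 + g #B) + #(X \ A) * (1 + g #X) := add_le_add hsum𝒞 (hsum𝒟.trans hgXA)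
    _ = #X * (1 + g #X)
        + (#(outerBoundary H X A) * (1 + g #B) - (g #X - g #B) * #A) := by
      rw [hcardB, hcardXA]; ring
    _ ≤ #X * (1 + g #X) := by
      have : #(outerBoundary H X A) * (1 + g #B) ≤ #(outerBoundary H X A) * (2 : ℝ) := by
        gcongr
        linarith [hg1 #B]
      linarith

end BoundedCover

section CoverOverhead

open Finset Real

variable {a γ δ p : ℝ} {m n : ℕ}

/-- The relative overhead charged to a set of `n` vertices when it is cut recursively into small
pieces along separators of size `n ^ (1 - γ)`. At `n = 0` it has the junk value `max 0 δ`. -/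
noncomputable def coverOverhead (δ a γ : ℝ) (n : ℕ) : ℝ :=
  max 0 (δ - a * (n : ℝ) ^ (-γ))

lemma coverOverhead_nonneg : 0 ≤ coverOverhead δ a γ n :=
  le_max_left _ _

lemma coverOverhead_le (hδ : 0 ≤ δ) (ha : 0 ≤ a) : coverOverhead δ a γ n ≤ δ :=
  max_le hδ (sub_le_self _ (by positivity))

lemma monotoneOn_coverOverhead (hγ : 0 ≤ γ) (ha : 0 ≤ a) :
    MonotoneOn (coverOverhead δ a γ) (Set.Ioi 0) := by
  intro m hm n _ hmn
  have : (n : ℝ) ^ (-γ) ≤ (m : ℝ) ^ (-γ) :=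
    rpow_le_rpow_of_nonpos (Nat.cast_pos.2 hm) (Nat.cast_le.2 hmn) (neg_nonpos.2 hγ)
  unfold coverOverhead
  gcongr

/- For this coefficient `a`, losing an eighth of `m` vertices lowers the overhead by at least
`2 * m ^ (-γ)`, twice the relative size of the separator. -/
lemma exists_mul_rpow_neg_eq_add_two (hγ : 0 < γ) : ∃ a > 0, a * (7 / 8 : ℝ) ^ (-γ) = a + 2 := by
  have h : 0 < (7 / 8 : ℝ) ^ (-γ) - 1 := sub_pos.2 <|
    one_lt_rpow_of_pos_of_lt_one_of_neg (by norm_num) (by norm_num) (neg_lt_zero.2 hγ)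
  refine ⟨2 / ((7 / 8 : ℝ) ^ (-γ) - 1), by positivity, ?_⟩
  field_simp
  ring

lemma coverOverhead_add_le (hγ : 0 ≤ γ) (ha0 : 0 ≤ a) (ha : a * (7 / 8) ^ (-γ) = a + 2)
    (hn : 0 < n) (hnm : 8 * n ≤ 7 * m) (hδ : (a + 2) * (m : ℝ) ^ (-γ) ≤ δ) :
    coverOverhead δ a γ n + 2 * (m : ℝ) ^ (-γ) ≤ coverOverhead δ a γ m := by
  have hnm' : (n : ℝ) ≤ 7 / 8 * m := by
    have : (8 * n : ℝ) ≤ 7 * m := by exact_mod_cast hnm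
    linarith
  have hpow : (a + 2) * (m : ℝ) ^ (-γ) ≤ a * (n : ℝ) ^ (-γ) := by
    calc (a + 2) * (m : ℝ) ^ (-γ) = a * (7 / 8 * (m : ℝ)) ^ (-γ) := by
          rw [← ha, mul_rpow (by norm_num) m.cast_nonneg, mul_assoc]
      _ ≤ a * (n : ℝ) ^ (-γ) := by
          gcongr a * ?_
          exact rpow_le_rpow_of_nonpos (Nat.cast_pos.2 hn) hnm' (neg_nonpos.2 hγ)
  unfold coverOverhead
  rw [max_add, max_le_iff]
  constructor <;> refine le_max_of_le_right ?_ <;> linarith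

lemma mul_rpow_neg_inv_le {x : ℝ} (hp : 0 < p) (ha : 0 < a) (hδ : 0 < δ)
    (hx : a ^ p * δ⁻¹ ^ p ≤ x) : a * x ^ (-p⁻¹) ≤ δ := by
  have hx0 : 0 < x := lt_of_lt_of_le (by positivity) hx
  rw [← mul_rpow ha.le (inv_pos.2 hδ).le, ← le_rpow_inv_iff_of_pos (by positivity) hx0.le hp,
    ← div_eq_mul_inv, div_le_iff₀ hδ] at hx
  rwa [rpow_neg hx0.le, ← div_eq_mul_inv, div_le_iff₀' (by positivity)]

theorem exists_boundedCover {c : ℝ} {k : ℕ} (hc : 0 ≤ c) (hp : 2 * k + 2 < p) :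
    ∃ C > 0, ∀ (V : Type u) (H : SimpleGraph V) (X : Finset V),
      HasPolynomialCliqueBound H X k c → ∀ δ : ℝ, 0 < δ → δ ≤ 1 → ∀ K : ℕ, C * δ⁻¹ ^ p ≤ K →
        ∃ 𝒞, IsBoundedCover H X K 𝒞 ∧ ∑ P ∈ 𝒞, (#P : ℝ) ≤ #X * (1 + δ) := by
  classical
  have hp0 : 0 < p := by linarith [Nat.cast_nonneg (α := ℝ) k]
  have hγ : 0 < p⁻¹ := inv_pos.2 hp0
  obtain ⟨n₀, hn₀⟩ := exists_separator.{u} hc hγ (k := k) (by rwa [inv_mul_lt_one₀ hp0])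
  obtain ⟨a, ha0, ha⟩ := exists_mul_rpow_neg_eq_add_two hγ
  refine ⟨max n₀ ((a + 2) ^ p), lt_max_of_lt_right (by positivity), ?_⟩
  intro V H X hX δ hδ0 hδ1 K hK
  have hδp : 1 ≤ δ⁻¹ ^ p := one_le_rpow ((one_le_inv₀ hδ0).2 hδ1) hp0.le
  have hn₀K : n₀ ≤ K := ((le_max_left _ _).trans (le_mul_of_one_le_right
    (le_max_of_le_right (by positivity)) hδp)).trans hK
  have haK : (a + 2) ^ p * δ⁻¹ ^ p ≤ K :=
    (mul_le_mul_of_nonneg_right (le_max_right _ _) (by positivity)).trans hK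
  have hle (n : ℕ) : coverOverhead δ a p⁻¹ n ≤ δ := coverOverhead_le hδ0.le ha0.le
  obtain ⟨𝒞, h𝒞, hsum⟩ := exists_boundedCover_of_separators (H := H) (X := X) (K := K)
    (fun n ↦ coverOverhead_nonneg) (fun n ↦ (hle n).trans hδ1)
    (monotoneOn_coverOverhead hγ.le ha0.le) fun Y hYX hKY ↦ by
      have hKY' : (K : ℝ) ≤ #Y := by exact_mod_cast hKY.le
      obtain ⟨A, hAY, hAne, hcard, hbd⟩ := hn₀ V H Y (hX.anti hYX) (hn₀K.trans hKY')
      refine ⟨A, hAY, hAne, by have := hKY.pos; omega, ?_⟩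
      have hgain := coverOverhead_add_le hγ.le ha0.le ha (hAne.mono subset_union_left).card_pos
        hcard (mul_rpow_neg_inv_le hp0 (by positivity) hδ0 (haK.trans hKY'))
      calc (2 * #(outerBoundary H Y A) : ℝ) ≤ 2 * (#Y : ℝ) ^ (-p⁻¹) * #A := by linarith
        _ ≤ _ := by gcongr; exact le_sub_iff_add_le'.2 hgain
  exact ⟨𝒞, h𝒞, hsum.trans (by gcongr; exact hle _)⟩

end CoverOverhead

section CliqueMinor

variable {V W W' : Type*} {G : SimpleGraph V} {r t : ℕ} {x : ℝ}

lemma IsShallowMinor.comap {H : SimpleGraph W} (h : IsShallowMinor G H t) {f : W' → W}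
    (hf : f.Injective) : IsShallowMinor G (H.comap f) t := by
  obtain ⟨cl, hdisj, hshallow, hadj⟩ := h
  exact ⟨cl ∘ f, fun w w' hw ↦ hdisj (hf.ne hw), fun w ↦ hshallow (f w),
    fun w w' hw ↦ hadj (f w) (f w') hw⟩

lemma NablaLE.card_le [Fintype W] (h : NablaLE G r x) (hx : 0 ≤ x)
    (hW : IsShallowMinor G (⊤ : SimpleGraph W) r) : Fintype.card W ≤ 2 * x + 1 := by
  classical
  have hf := (Fintype.equivFin W).symm.injective
  have htop : (⊤ : SimpleGraph W).comap (Fintype.equivFin W).symm = ⊤ := SimpleGraph.comap_top hf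
  have hedges := h _ _ (htop ▸ hW.comap hf)
  rw [Set.ncard_eq_toFinset_card', ← SimpleGraph.edgeFinset,
    SimpleGraph.card_edgeFinset_top_eq_card_choose_two, Fintype.card_fin,
    Nat.cast_choose_two] at hedges
  by_contra! hlt
  nlinarith

end CliqueMinor

section Contraction

variable {V : Type*} {G : SimpleGraph V} {X : Finset V} {Y Z : Set V} {cl : V → Set V} {a b : V}
  {k r t : ℕ} {c : ℝ}

/-- The sets `cl a`, for `a ∈ X`, are pairwise disjoint and `cl a` is spanned by a star of `G` with
centre `a`. -/
structure IsStarFamily (G : SimpleGraph V) (X : Set V) (cl : V → Set V) : Prop where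
  center_mem : ∀ a ∈ X, a ∈ cl a
  eq_or_adj : ∀ a ∈ X, ∀ b ∈ cl a, b = a ∨ G.Adj a b
  disjoint : X.PairwiseDisjoint cl

/-- The graph obtained from `G` by contracting each set `cl a` to the vertex `a`. -/
def contraction (G : SimpleGraph V) (cl : V → Set V) : SimpleGraph V where
  Adj a b := a ≠ b ∧ ∃ u ∈ cl a, ∃ v ∈ cl b, G.Adj u v
  symm := ⟨fun _ _ ⟨hne, u, hu, v, hv, huv⟩ ↦ ⟨hne.symm, v, hv, u, hu, huv.symm⟩⟩

lemma contraction_adj :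
    (contraction G cl).Adj a b ↔ a ≠ b ∧ ∃ u ∈ cl a, ∃ v ∈ cl b, G.Adj u v :=
  .rfl

namespace IsStarFamily

lemma reachesWithin_of_mem (h : IsStarFamily G Y cl) (ha : a ∈ Y) (hb : b ∈ cl a) :
    ReachesWithin G (cl a) 1 a b := by
  obtain rfl | hab := h.eq_or_adj a ha b hb
  · exact .refl hb
  · exact .of_adj (h.center_mem a ha) hb hab

lemma reachesWithin_biUnion (h : IsStarFamily G Y cl) (hZ : Z ⊆ Y)
    (hab : ReachesWithin (contraction G cl) Z t a b) :
    ReachesWithin G (⋃ z ∈ Z, cl z) (3 * t) a b := by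
  obtain ⟨p, hlen, hsupp⟩ := hab
  suffices ReachesWithin G (⋃ z ∈ Z, cl z) (3 * p.length) a b from this.mono le_rfl (by omega)
  have hstar {z u} (hz : z ∈ Z) (hu : u ∈ cl z) : ReachesWithin G (⋃ z ∈ Z, cl z) 1 z u :=
    (h.reachesWithin_of_mem (hZ hz) hu).mono (Set.subset_biUnion_of_mem hz) le_rfl
  clear hlen
  induction p with
  | nil =>
    have ha := hsupp _ (SimpleGraph.Walk.start_mem_support _)
    exact .refl (Set.mem_biUnion ha (h.center_mem _ (hZ ha)))
  | cons hadj p ih =>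
    have ha := hsupp _ (SimpleGraph.Walk.start_mem_support _)
    have hc := hsupp _ (List.mem_cons_of_mem _ p.start_mem_support)
    have hp := ih fun z hz ↦ hsupp z (List.mem_cons_of_mem _ hz)
    obtain ⟨-, u, hu, v, hv, huv⟩ := contraction_adj.1 hadj
    have huv' := ReachesWithin.of_adj (Set.mem_biUnion ha hu) (Set.mem_biUnion hc hv) huv
    refine ((((hstar ha hu).trans huv').trans (hstar hc hv).symm).trans hp).mono le_rfl ?_
    rw [SimpleGraph.Walk.length_cons]
    omega

lemma isShallowSet_biUnion (h : IsStarFamily G Y cl) (hZ : Z ⊆ Y)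
    (hshallow : IsShallowSet (contraction G cl) Z r) :
    IsShallowSet G (⋃ z ∈ Z, cl z) (3 * r + 1) := by
  obtain ⟨v, hv, hreach⟩ := hshallow
  refine ⟨v, Set.mem_biUnion hv (h.center_mem v (hZ hv)), fun u hu ↦ ?_⟩
  obtain ⟨z, hz, huz⟩ := Set.mem_iUnion₂.1 hu
  exact (h.reachesWithin_biUnion hZ (hreach z hz)).trans
    ((h.reachesWithin_of_mem (hZ hz) huz).mono (Set.subset_biUnion_of_mem hz) le_rfl)

lemma isShallowMinor_top (h : IsStarFamily G X cl) {F : Finset (Finset V)}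
    (hF : IsShallowCliqueModel (contraction G cl) X r F) :
    IsShallowMinor G (⊤ : SimpleGraph F) (3 * r + 1) := by
  refine ⟨fun Z ↦ ⋃ z ∈ Z.1, cl z, fun Z Z' hne ↦ ?_, fun Z ↦ ?_, fun Z Z' hne ↦ ?_⟩
  · have hdisj := hF.disjoint Z Z.2 Z' Z'.2 (Subtype.coe_ne_coe.2 hne)
    refine Set.disjoint_iUnion₂_left.2 fun z hz ↦ Set.disjoint_iUnion₂_right.2 fun z' hz' ↦ ?_
    exact h.disjoint (hF.subset Z Z.2 hz) (hF.subset Z' Z'.2 hz')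
      fun hzz' ↦ Finset.disjoint_left.1 hdisj hz (hzz' ▸ hz')
  · exact (h.isShallowSet_biUnion (Finset.coe_subset.2 (hF.subset Z Z.2))
      (hF.isShallowSet Z Z.2)).isShallowGraph_induce
  · obtain ⟨z, hz, z', hz', -, u, hu, v, hv, huv⟩ :=
      hF.exists_adj Z Z.2 Z' Z'.2 (Subtype.coe_ne_coe.2 hne)
    exact ⟨u, Set.mem_biUnion hz hu, v, Set.mem_biUnion hz' hv, huv⟩

theorem hasPolynomialCliqueBound_contraction (h : IsStarFamily G X cl) (hc : 0 ≤ c)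
    (hG : ∀ r : ℕ, NablaLE G r (c * ((r : ℝ) + 1) ^ k)) :
    HasPolynomialCliqueBound (contraction G cl) X k (2 * c * 3 ^ k + 1) := by
  intro r F hF
  have hcard := (hG (3 * r + 1)).card_le (by positivity) (h.isShallowMinor_top hF)
  rw [Fintype.card_coe] at hcard
  calc (F.card : ℝ) ≤ 2 * (c * (((3 * r + 1 : ℕ) : ℝ) + 1) ^ k) + 1 := hcard
    _ ≤ 2 * (c * (3 * ((r : ℝ) + 1)) ^ k) + ((r : ℝ) + 1) ^ k := by
      gcongr
      · push_cast; linarith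
      · exact one_le_pow₀ (by linarith [r.cast_nonneg (α := ℝ)])
    _ = (2 * c * 3 ^ k + 1) * ((r : ℝ) + 1) ^ k := by rw [mul_pow]; ring

end IsStarFamily

end Contraction

section PrivatePart

open Finset

variable {α : Type*} [DecidableEq α] {𝒞 : Finset (Finset α)} {A L P S X : Finset α} {x : α}

/-- The elements of `P` that belong to no other member of `𝒞`. These are the ones a local exchange
may remove without affecting the other members. -/
def privatePart (𝒞 : Finset (Finset α)) (P : Finset α) : Finset α :=
  {x ∈ P | ∀ Q ∈ 𝒞, x ∈ Q → Q = P}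

lemma mem_privatePart : x ∈ privatePart 𝒞 P ↔ x ∈ P ∧ ∀ Q ∈ 𝒞, x ∈ Q → Q = P :=
  mem_filter

lemma sum_card_inter_add_card_le (hX : ∀ x ∈ X, ∃ P ∈ 𝒞, x ∈ P) (hA : A ⊆ X) :
    ∑ P ∈ 𝒞, #(A ∩ P) + #X ≤ #A + ∑ P ∈ 𝒞, #P := by
  have hsub : X \ A ⊆ 𝒞.biUnion (· \ A) := fun x hx ↦ by
    obtain ⟨hxX, hxA⟩ := mem_sdiff.1 hx
    obtain ⟨P, hP, hxP⟩ := hX x hxX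
    exact mem_biUnion.2 ⟨P, hP, mem_sdiff.2 ⟨hxP, hxA⟩⟩
  calc ∑ P ∈ 𝒞, #(A ∩ P) + #X = #A + (∑ P ∈ 𝒞, #(A ∩ P) + #(X \ A)) := by
        rw [← card_sdiff_add_card_eq_card hA]; ring
    _ ≤ #A + (∑ P ∈ 𝒞, #(A ∩ P) + ∑ P ∈ 𝒞, #(P \ A)) := by
        gcongr
        exact (card_le_card hsub).trans card_biUnion_le
    _ = #A + ∑ P ∈ 𝒞, #P := by
        simp_rw [← sum_add_distrib, inter_comm A, card_inter_add_card_sdiff]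

lemma two_mul_card_le_sum (hL : ∀ x ∈ L, ∃ P ∈ 𝒞, x ∈ P) :
    2 * #L ≤ ∑ P ∈ 𝒞, #(L ∩ privatePart 𝒞 P) + ∑ P ∈ 𝒞, #(L ∩ P) := by
  have two_le (x) (hx : x ∈ L) : 2 ≤ #{P ∈ 𝒞 | x ∈ privatePart 𝒞 P} + #{P ∈ 𝒞 | x ∈ P} := by
    obtain ⟨P, hP, hxP⟩ := hL x hx
    have hpos : 0 < #{P ∈ 𝒞 | x ∈ P} := card_pos.2 ⟨P, mem_filter.2 ⟨hP, hxP⟩⟩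
    by_cases hpriv : x ∈ privatePart 𝒞 P
    · have : 0 < #{P ∈ 𝒞 | x ∈ privatePart 𝒞 P} := card_pos.2 ⟨P, mem_filter.2 ⟨hP, hpriv⟩⟩
      omega
    · obtain ⟨Q, hQ, hxQ, hQP⟩ : ∃ Q ∈ 𝒞, x ∈ Q ∧ Q ≠ P := by
        simpa [mem_privatePart, hxP] using hpriv
      have : 1 < #{P ∈ 𝒞 | x ∈ P} :=
        one_lt_card.2 ⟨Q, mem_filter.2 ⟨hQ, hxQ⟩, P, mem_filter.2 ⟨hP, hxP⟩, hQP⟩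
      omega
  have double_count (f : Finset α → Finset α) :
      ∑ x ∈ L, #{P ∈ 𝒞 | x ∈ f P} = ∑ P ∈ 𝒞, #(L ∩ f P) := by
    simp_rw [← filter_mem_eq_inter]
    exact sum_card_bipartiteAbove_eq_sum_card_bipartiteBelow fun x P ↦ x ∈ f P
  calc 2 * #L = ∑ x ∈ L, 2 := by rw [sum_const, smul_eq_mul, mul_comm]
    _ ≤ ∑ x ∈ L, (#{P ∈ 𝒞 | x ∈ privatePart 𝒞 P} + #{P ∈ 𝒞 | x ∈ P}) := sum_le_sum two_le
    _ = _ := by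
      rw [sum_add_distrib, double_count, double_count fun P ↦ P]

lemma card_add_two_mul_card_le_of_private (hX : ∀ x ∈ X, ∃ P ∈ 𝒞, x ∈ P) (hL : L ⊆ X)
    (hS : S ⊆ X) (hpriv : ∀ P ∈ 𝒞, #(L ∩ privatePart 𝒞 P) ≤ #(S ∩ P)) :
    #L + 2 * #X ≤ #S + 2 * ∑ P ∈ 𝒞, #P := by
  have := two_mul_card_le_sum fun x hx ↦ hX x (hL hx)
  have := sum_le_sum hpriv
  have := sum_card_inter_add_card_le hX hL
  have := sum_card_inter_add_card_le hX hS
  omega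

end PrivatePart

section Exchange

open Finset

variable {V : Type*} {G : SimpleGraph V} {D W X : Set V} {K : ℕ} {l s : V → V} {w : V}

/-- `f` chooses for each vertex of `W` a vertex of `D` dominating it, and a vertex of `W ∩ D` is
dominated by itself. -/
def IsDominatorMap (G : SimpleGraph V) (D W : Set V) (f : V → V) : Prop :=
  ∀ w ∈ W, f w ∈ D ∧ (f w = w ∨ w ∉ D ∧ G.Adj (f w) w)

lemma Dominates.exists_isDominatorMap (h : Dominates G D W) : ∃ f, IsDominatorMap G D W f := by
  have hdom : ∀ w ∈ W, ∃ u, u ∈ D ∧ (u = w ∨ w ∉ D ∧ G.Adj u w) := fun w hw ↦ by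
    by_cases hwD : w ∈ D
    · exact ⟨w, hwD, .inl rfl⟩
    · obtain ⟨u, hu, huw⟩ := (h w hw).resolve_left hwD
      exact ⟨u, hu, .inr ⟨hwD, huw⟩⟩
  by_cases hV : Nonempty V
  · choose! f hf using hdom
    exact ⟨f, hf⟩
  · exact ⟨id, fun w ↦ absurd ⟨w⟩ hV⟩

lemma IsDominatorMap.mem_or_exists_adj {f : V → V} {T : Set V} (hf : IsDominatorMap G D W f)
    (hw : w ∈ W) (hT : f w ∈ T) : w ∈ T ∨ ∃ u ∈ T, G.Adj u w := by
  obtain hfw | ⟨-, hadj⟩ := (hf w hw).2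
  · exact .inl (hfw ▸ hT)
  · exact .inr ⟨f w, hT, hadj⟩

/-- The vertex `a` together with the vertices of `W` outside `X` to which `s` assigns `a`. -/
def dominationStar (W X : Set V) (s : V → V) (a : V) : Set V :=
  insert a {b | b ∈ W ∧ b ∉ X ∧ s b = a}

lemma IsDominatorMap.isStarFamily (hs : IsDominatorMap G D W s) :
    IsStarFamily G X (dominationStar W X s) where
  center_mem a _ := Set.mem_insert a _
  eq_or_adj := by
    rintro a - b (rfl | ⟨hbW, -, rfl⟩)
    · exact .inl rfl
    · exact (hs b hbW).2.imp Eq.symm And.right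
  disjoint a ha a' ha' hne := by
    refine Set.disjoint_left.2 ?_
    rintro b (rfl | ⟨-, hbX, rfl⟩) (rfl | ⟨-, hbX', rfl⟩)
    exacts [hne rfl, hbX' ha, hbX ha', hne rfl]

/- For `w ∉ X` the edge between the two dominators comes from the edge joining `w`, which lies in
the star of `s w`, to `l w`. -/
lemma eq_or_contraction_adj_dominators {L S : Set V} (hl : IsDominatorMap G L W l)
    (hs : IsDominatorMap G S W s) (hw : w ∈ W) :
    s w = l w ∨ (contraction G (dominationStar W (L ∪ S) s)).Adj (s w) (l w) := by
  refine or_iff_not_imp_left.2 fun hne ↦ ⟨hne, ?_⟩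
  obtain hlw | ⟨hwL, hadj⟩ := (hl w hw).2
  · have hadj := ((hs w hw).2.resolve_left fun hsw ↦ hne (hsw.trans hlw.symm)).2
    exact ⟨s w, Set.mem_insert .., l w, Set.mem_insert .., hlw.symm ▸ hadj⟩
  · refine ⟨w, ?_, l w, Set.mem_insert .., hadj.symm⟩
    obtain hsw | ⟨hwS, -⟩ := (hs w hw).2
    · exact .inl hsw.symm
    · exact .inr ⟨hw, by simp [hwL, hwS], rfl⟩

/-- `L` is at most as large as any finite dominating subset of `D` that differs from it in at most
`K` vertices. -/
def IsLocallyMinimal (G : SimpleGraph V) (D W : Set V) (K : ℕ) (L : Set V) : Prop :=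
  ∀ L' ⊆ D, L'.Finite → Dominates G L' W → (symmDiff L L').ncard ≤ K → L.ncard ≤ L'.ncard

variable [DecidableEq V] {L S P : Finset V} {𝒞 : Finset (Finset V)}

lemma dominates_exchange (hl : IsDominatorMap G L W l) (hs : IsDominatorMap G S W s)
    (h𝒞 : IsBoundedCover (contraction G (dominationStar W (L ∪ S) s)) (L ∪ S) K 𝒞) :
    Dominates G ((L \ privatePart 𝒞 P) ∪ (S ∩ P) : Finset V) W := by
  intro w hw
  have hlL : l w ∈ L := (hl w hw).1
  have hsS : s w ∈ S := (hs w hw).1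
  by_cases hpriv : l w ∈ privatePart 𝒞 P
  · obtain ⟨Q, hQ, hsQ, hlQ⟩ : ∃ Q ∈ 𝒞, s w ∈ Q ∧ l w ∈ Q := by
      obtain heq | hadj := eq_or_contraction_adj_dominators hl hs hw
      · simpa [heq] using h𝒞.exists_mem (l w) (mem_union_left _ hlL)
      · exact h𝒞.exists_mem_of_adj _ (mem_union_right _ hsS) _ (mem_union_left _ hlL) hadj
    obtain rfl : Q = P := (mem_privatePart.1 hpriv).2 Q hQ hlQ
    exact hs.mem_or_exists_adj hw (mem_union_right _ (mem_inter.2 ⟨hsS, hsQ⟩))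
  · exact hl.mem_or_exists_adj hw (mem_union_left _ (mem_sdiff.2 ⟨hlL, hpriv⟩))

lemma IsLocallyMinimal.card_inter_privatePart_le (hmin : IsLocallyMinimal G D W K L)
    (hLD : ↑L ⊆ D) (hSD : ↑S ⊆ D) (hl : IsDominatorMap G L W l) (hs : IsDominatorMap G S W s)
    (h𝒞 : IsBoundedCover (contraction G (dominationStar W (L ∪ S) s)) (L ∪ S) K 𝒞) (hP : P ∈ 𝒞) :
    #(L ∩ privatePart 𝒞 P) ≤ #(S ∩ P) := by
  set T := (L \ privatePart 𝒞 P) ∪ (S ∩ P)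
  have hTD : (T : Set V) ⊆ D := by
    rw [coe_union]
    exact Set.union_subset ((coe_subset.2 sdiff_subset).trans hLD)
      ((coe_subset.2 inter_subset_left).trans hSD)
  have hdiff : symmDiff L T ⊆ P := fun x hx ↦ by
    grind [mem_symmDiff, mem_privatePart]
  have hcard : #L ≤ #T := by
    have := hmin T hTD T.finite_toSet (dominates_exchange hl hs h𝒞) (by
      rw [← coe_symmDiff, Set.ncard_coe_finset]
      exact (card_le_card hdiff).trans (h𝒞.card_le P hP))
    simpa using this
  have : #T ≤ #(L \ privatePart 𝒞 P) + #(S ∩ P) := card_union_le _ _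
  have := card_sdiff_add_card_inter L (privatePart 𝒞 P)
  omega

theorem IsLocallyMinimal.card_add_two_mul_card_union_le (hmin : IsLocallyMinimal G D W K L)
    (hLD : ↑L ⊆ D) (hSD : ↑S ⊆ D) (hl : IsDominatorMap G L W l) (hs : IsDominatorMap G S W s)
    (h𝒞 : IsBoundedCover (contraction G (dominationStar W (L ∪ S) s)) (L ∪ S) K 𝒞) :
    #L + 2 * #(L ∪ S) ≤ #S + 2 * ∑ P ∈ 𝒞, #P :=
  card_add_two_mul_card_le_of_private h𝒞.exists_mem subset_union_left subset_union_right
    fun _ hP ↦ hmin.card_inter_privatePart_le hLD hSD hl hs h𝒞 hP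

end Exchange

section LocalSearch

open Finset

theorem stmt16_general (k : ℕ) (c : ℝ) (hc : 0 ≤ c) (p : ℝ) (hp : 2 * k + 2 < p) :
    ∃ C : ℝ, 0 < C ∧ ∀ (V : Type u) (G : SimpleGraph V),
      (∀ r : ℕ, NablaLE G r (c * ((r : ℝ) + 1) ^ k)) →
      ∀ (W D : Set V) (ε : ℝ), 0 < ε → ε ≤ 1 → ∀ K : ℕ, C * ε⁻¹ ^ p ≤ K →
        ∀ L ⊆ D, L.Finite → Dominates G L W → IsLocallyMinimal G D W K L →
          ∀ S ⊆ D, S.Finite → Dominates G S W → (L.ncard : ℝ) ≤ (1 + ε) * (S.ncard : ℝ) := by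
  classical
  obtain ⟨C, hC, hcover⟩ := exists_boundedCover.{u} (c := 2 * c * 3 ^ k + 1) (by positivity) hp
  refine ⟨C * 6 ^ p, by positivity, ?_⟩
  intro V G hG W D ε hε0 hε1 K hK L hLD hLfin hLdom hmin S hSD hSfin hSdom
  lift L to Finset V using hLfin
  lift S to Finset V using hSfin
  obtain ⟨l, hl⟩ := hLdom.exists_isDominatorMap
  obtain ⟨s, hs⟩ := hSdom.exists_isDominatorMap
  have hstar : IsStarFamily G ↑(L ∪ S) (dominationStar W (L ∪ S) s) :=
    coe_union L S ▸ hs.isStarFamily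
  have hK' : C * (ε / 6)⁻¹ ^ p ≤ K := by
    rwa [inv_div, div_eq_mul_inv, Real.mul_rpow (by norm_num) (by positivity), ← mul_assoc]
  obtain ⟨𝒞, h𝒞, hsum⟩ := hcover V _ _ (hstar.hasPolynomialCliqueBound_contraction hc hG) (ε / 6)
    (by positivity) (by linarith) K hK'
  have hcount : (#L + 2 * #(L ∪ S) : ℝ) ≤ #S + 2 * ∑ P ∈ 𝒞, (#P : ℝ) := by
    exact_mod_cast hmin.card_add_two_mul_card_union_le hLD hSD hl hs h𝒞
  have hunion : (#(L ∪ S) : ℝ) ≤ #L + #S := by exact_mod_cast card_union_le L S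
  rw [Set.ncard_coe_finset, Set.ncard_coe_finset]
  have hL : (1 - ε / 3) * #L ≤ (1 + ε / 3) * #S := by nlinarith
  nlinarith [mul_nonneg (mul_nonneg hε0.le (sub_nonneg.2 hε1)) (Nat.cast_nonneg (α := ℝ) #S)]

end LocalSearch

lemma mul_inv_pow_le_ceil_mul_log_pow {C ε : ℝ} (hC : 0 ≤ C) (hε0 : 0 < ε) (hε1 : ε ≤ 1)
    (m n : ℕ) : C * ε⁻¹ ^ m ≤ ⌈C * ε⁻¹ ^ m * (1 + Real.log (1 / ε)) ^ n⌉₊ := by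
  have hlog : 0 ≤ Real.log (1 / ε) := Real.log_nonneg (one_le_one_div hε0 hε1)
  exact (le_mul_of_one_le_right (by positivity) (one_le_pow₀ (by linarith))).trans (Nat.le_ceil _)

/-- PTAS via local search for the dominating subset problem on graphs with
polynomial expansion `∇_r(G) ≤ c(r+1)^k`:  every `K`-locally minimal `L ⊆ D` dominating `W`
with `K = ⌈C·ε^{-(2k+6)}(1+log(1/ε))^{2k+5}⌉` is a `(1+ε)`-approximation. -/
theorem stmt16 (k : ℕ) (hk : 1 ≤ k) (c : ℝ) (hc : 0 < c) :
    ∃ C : ℝ, 0 < C ∧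
      ∀ (V : Type) [Fintype V] (G : SimpleGraph V),
        (∀ r : ℕ, NablaLE G r (c * ((r : ℝ) + 1) ^ k)) →
        ∀ (W D : Set V), Dominates G D W →
        ∀ ε : ℝ, 0 < ε → ε < 1 →
          ∀ L ⊆ D, Dominates G L W →
            (¬ ∃ L' ⊆ D, Dominates G L' W ∧
              (symmDiff L L').ncard ≤
                ⌈C * ε⁻¹ ^ (2 * k + 6) * (1 + Real.log (1 / ε)) ^ (2 * k + 5)⌉₊ ∧
              L'.ncard < L.ncard) →
            ∀ S ⊆ D, Dominates G S W →
              (L.ncard : ℝ) ≤ (1 + ε) * (S.ncard : ℝ) := by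
  obtain ⟨C, hC, h⟩ := stmt16_general k c hc.le (2 * k + 6 : ℕ) (by push_cast; linarith)
  refine ⟨C, hC, fun V _ G hG W D _ ε hε0 hε1 L hLD hL hmin S hSD hS ↦ ?_⟩
  have hK := mul_inv_pow_le_ceil_mul_log_pow hC.le hε0 hε1.le (2 * k + 6) (2 * k + 5)
  rw [← Real.rpow_natCast] at hK
  exact h V G hG W D ε hε0 hε1.le _ hK L hLD L.toFinite hL
    (fun L' hL'D _ hL' hdiff ↦ not_lt.1 fun hlt ↦ hmin ⟨L', hL'D, hL',
      by rwa [← Real.rpow_natCast ε⁻¹], hlt⟩) S hSD S.toFinite hS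
end
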